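/- arXiv:1412.6908 — 2 statements merged into one kernel-verified Lean document; each statement's English description precedes it below -/
import Mathlib

section
/- Let F_n be a free group of finite rank n with free basis {x_1, …, x_n}, and let φ : F_n → F_n be an endomorphism satisfying φ(x_i) = x_i for i = 1, …, n−1 (φ(x_n) arbitrary). Then the image H = φ(F_n) is inert in F_n; that is, rk(H ∩ G) ≤ rk(G) for every finitely generated subgroup G of F_n. -/
/-- The rank of a subgroup: the minimal cardinality of a generating set.
For subgroups of free groups (which are free by Nielsen–Schreier) this is the
cardinality of a free basis. -/
noncomputable def rk {G : Type*} [Group G] (H : Subgroup G) : Cardinal :=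
  ⨅ S : {S : Set G // Subgroup.closure S = H}, Cardinal.mk S.1

/-- A subgroup `H` is inert if `rk (H ⊓ K) ≤ rk K` for every finitely generated `K`. -/
def IsInert {G : Type*} [Group G] (H : Subgroup G) : Prop :=
  ∀ K : Subgroup G, K.FG → rk (H ⊓ K) ≤ rk K

/-- `stage x i` is the subgroup generated by the first `i` elements of `x`. -/
def stage {n : ℕ} {F : Type*} [Group F] (x : Fin n → F) (i : ℕ) : Subgroup F :=
  Subgroup.closure (x '' {j | (j : ℕ) < i})

/-- `x` is an ordered free basis of `F`. -/
def IsOrderedBasis {n : ℕ} {F : Type*} [Group F] (x : Fin n → F) : Prop :=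
  Function.Bijective (FreeGroup.lift x)

/-- `H` is in echelon form with respect to the ordered basis `x`:
`rk (H ⊓ F_i) ≤ rk (H ⊓ F_{i-1}) + 1` for `i = 1, …, n`. -/
def InEchelonForm {n : ℕ} {F : Type*} [Group F] (x : Fin n → F) (H : Subgroup F) : Prop :=
  ∀ i : ℕ, i < n → rk (H ⊓ stage x (i + 1)) ≤ rk (H ⊓ stage x i) + 1

/-- `H` is an echelon subgroup: it is in echelon form with respect to
some ordered free basis. -/
def IsEchelon {n : ℕ} (H : Subgroup (FreeGroup (Fin n))) : Prop :=
  ∃ x : Fin n → FreeGroup (Fin n), IsOrderedBasis x ∧ InEchelonForm x H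

/-- A 1-generator (subgroup) endomorphism: an endomorphism fixing all but (possibly)
one member of some set of free generators. -/
def IsOneGenEndo {G : Type*} [Group G] (φ : G →* G) : Prop :=
  ∃ (ι : Type) (b : FreeGroupBasis ι G) (s : Set ι),
    s.Subsingleton ∧ ∀ i ∉ s, φ (b i) = b i

/-- The subgroup of points fixed by an endomorphism. -/
def fixedSubgroup {G : Type*} [Group G] (φ : G →* G) : Subgroup G where
  carrier := {g | φ g = g}
  one_mem' := by simp
  mul_mem' := by intro a b ha hb; simp only [Set.mem_setOf_eq, map_mul] at *; rw [ha, hb]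
  inv_mem' := by intro a ha; simp only [Set.mem_setOf_eq, map_inv] at *; rw [ha]

/-- An element is primitive if it belongs to some free basis. -/
def IsPrimitive {n : ℕ} (g : FreeGroup (Fin n)) : Prop :=
  ∃ x : Fin n → FreeGroup (Fin n), IsOrderedBasis x ∧ ∃ j, x j = g


/-- Groups with unique products and polynomial growth. -/
structure GoodGroup (Q : Type) [Group Q] : Prop where
  up : UniqueProds Q
  growth : ∃ B : ℕ → Finset Q, (∀ q, ∃ l, q ∈ B l) ∧ Monotone B ∧
    (∀ a b x y, x ∈ B a → y ∈ B b → x * y ∈ B (a + b)) ∧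
    ∃ c d : ℕ, ∀ l, (B l).card ≤ c * (l + 1) ^ d

theorem GoodGroup.pi {ι : Type} [Finite ι] (Q : ι → Type) [∀ i, Group (Q i)]
    (h : ∀ i, GoodGroup (Q i)) : GoodGroup (∀ i, Q i) := by
  classical
  have := Fintype.ofFinite ι
  have := fun i => (h i).up
  choose B h1 h2 h3 c d h4 using fun i => (h i).growth
  refine ⟨inferInstance, fun l => Fintype.piFinset fun i => B i l, ?_, ?_, ?_, ∏ i, c i, ∑ i, d i, ?_⟩
  · intro q
    choose l hl using fun i => h1 i (q i)
    refine ⟨∑ i, l i, ?_⟩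
    rw [Fintype.mem_piFinset]
    intro i
    exact h2 i (Finset.single_le_sum (f := l) (fun _ _ => Nat.zero_le _) (Finset.mem_univ i)) (hl i)
  · intro a b hab
    exact Fintype.piFinset_subset _ _ fun i => h2 i hab
  · intro a b x y hx hy
    rw [Fintype.mem_piFinset] at *
    intro i
    exact h3 i a b _ _ (hx i) (hy i)
  · intro l
    rw [Fintype.card_piFinset, ← Finset.prod_pow_eq_pow_sum, ← Finset.prod_mul_distrib]
    exact Finset.prod_le_prod' fun i _ => h4 i l

/-- Upper unitriangular matrices -/
def IsUT {N : ℕ} (M : Matrix (Fin N) (Fin N) ℤ) : Prop :=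
  (∀ i j, j < i → M i j = 0) ∧ ∀ i, M i i = 1

theorem IsUT.mul_aux {N : ℕ} {M U : Matrix (Fin N) (Fin N) ℤ}
    (hU : IsUT U) (i j : Fin N) (h : ∀ a, a < j → M i a = 0) : (M * U) i j = M i j := by
  rw [Matrix.mul_apply, Finset.sum_eq_single j]
  · rw [hU.2, mul_one]
  · intro a _ ha
    rcases lt_or_gt_of_ne ha with h' | h'
    · rw [h a h', zero_mul]
    · rw [hU.1 a j h', mul_zero]
  · simp

theorem IsUT.mul {N : ℕ} {M U : Matrix (Fin N) (Fin N) ℤ} (hM : IsUT M) (hU : IsUT U) :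
    IsUT (M * U) := by
  constructor
  · intro i j hij
    rw [hU.mul_aux i j fun a ha => hM.1 i a (ha.trans hij), hM.1 i j hij]
  · intro i
    rw [hU.mul_aux i i fun a ha => hM.1 i a ha, hM.2]

theorem IsUT.one {N : ℕ} : IsUT (1 : Matrix (Fin N) (Fin N) ℤ) :=
  ⟨fun _ _ h => Matrix.one_apply_ne h.ne', fun _ => Matrix.one_apply_eq _⟩

def UT (N : ℕ) : Subgroup (Matrix (Fin N) (Fin N) ℤ)ˣ where
  carrier := {u | IsUT u.val ∧ IsUT u.inv}
  one_mem' := ⟨IsUT.one, IsUT.one⟩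
  mul_mem' := fun ha hb => ⟨ha.1.mul hb.1, hb.2.mul ha.2⟩
  inv_mem' := fun ha => ⟨ha.2, ha.1⟩

def UT.mat {N : ℕ} (u : UT N) : Matrix (Fin N) (Fin N) ℤ := u.1.1

theorem UT.mat_inj {N : ℕ} {u v : UT N} (h : (UT.mat u) = (UT.mat v)) : u = v :=
  Subtype.ext (Units.ext h)

theorem UT.mat_mul {N : ℕ} (u v : UT N) : (UT.mat (u * v)) = (UT.mat u) * (UT.mat v) := rfl

/-- The key: entries listed superdiagonal by superdiagonal. -/
def UT.key {N : ℕ} (u : UT N) : Lex (Fin N ×ₗ Fin N → ℤ) :=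
  toLex fun p => if h : ((ofLex p).2 : ℕ) + (ofLex p).1 < N then (UT.mat u) (ofLex p).2 ⟨_, h⟩ else 0

theorem UT.key_apply {N : ℕ} (u : UT N) (d i j : Fin N) (h : (i : ℕ) + d = j) :
    ofLex (UT.key u) (toLex (d, i)) = (UT.mat u) i j := by
  have : (i : ℕ) + d < N := h ▸ j.2
  have hj : j = ⟨(i : ℕ) + d, this⟩ := Fin.ext h.symm
  subst hj
  exact dif_pos this

theorem UT.key_inj {N : ℕ} : Function.Injective (UT.key (N := N)) := by
  intro u v h
  apply UT.mat_inj
  ext i j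
  rcases lt_or_ge j i with hij | hij
  · exact (u.2.1.1 i j hij).trans (v.2.1.1 i j hij).symm
  · have hd : (j : ℕ) - i < N := by omega
    have hh : (i : ℕ) + (⟨j - i, hd⟩ : Fin N) = j := by simp; omega
    rw [← UT.key_apply u ⟨j - i, hd⟩ i j hh, ← UT.key_apply v ⟨j - i, hd⟩ i j hh, h]

noncomputable instance UT.linearOrder {N : ℕ} : LinearOrder (UT N) :=
  LinearOrder.lift' UT.key UT.key_inj

theorem UT.mul_key {N : ℕ} (u v w : UT N) (d i : Fin N)
    (h : ∀ dd ii : Fin N, dd < d → ofLex (UT.key u) (toLex (dd, ii)) = ofLex (UT.key v) (toLex (dd, ii))) :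
    ofLex (UT.key (u * w)) (toLex (d, i)) - ofLex (UT.key (v * w)) (toLex (d, i)) =
      ofLex (UT.key u) (toLex (d, i)) - ofLex (UT.key v) (toLex (d, i)) := by
  by_cases hd : (i : ℕ) + d < N
  · rw [UT.key_apply (u * w) d i ⟨_, hd⟩ rfl, UT.key_apply (v * w) d i ⟨_, hd⟩ rfl,
      UT.key_apply u d i ⟨_, hd⟩ rfl, UT.key_apply v d i ⟨_, hd⟩ rfl, UT.mat_mul, UT.mat_mul,
      ← Matrix.sub_apply, ← Matrix.sub_mul, IsUT.mul_aux (U := UT.mat w) w.2.1, Matrix.sub_apply]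
    intro a ha
    rw [Matrix.sub_apply, sub_eq_zero]
    rcases lt_or_ge a i with hij | hij
    · exact (u.2.1.1 i a hij).trans (v.2.1.1 i a hij).symm
    · have ha' : (a : ℕ) < i + d := ha
      have hij' : (i : ℕ) ≤ a := hij
      have hd : (a : ℕ) - i < N := by omega
      have hh : (i : ℕ) + (⟨a - i, hd⟩ : Fin N) = a := by simp; omega
      rw [← UT.key_apply u ⟨a - i, hd⟩ i a hh, ← UT.key_apply v ⟨a - i, hd⟩ i a hh]
      apply h
      rw [Fin.lt_def]
      simp only
      omega
  · simp [UT.key, hd]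

theorem UT.mul_lt {N : ℕ} (u v w : UT N) (h : u < v) : u * w < v * w := by
  have h' : (UT.key u) < (UT.key v) := h
  change (UT.key (u * w)) < (UT.key (v * w))
  obtain ⟨p, hp1, hp2⟩ := h'
  obtain ⟨d, i⟩ := p
  refine ⟨toLex (d, i), ?_, ?_⟩
  · rintro ⟨dd, ii⟩ hlt
    have hd : dd ≤ d := by
      rcases Prod.Lex.toLex_lt_toLex.1 hlt with h | h
      · exact le_of_lt h
      · exact h.1.le
    have := UT.mul_key u v w dd ii (fun e k he => hp1 (toLex (e, k))
      (Prod.Lex.toLex_lt_toLex.2 (Or.inl (lt_of_lt_of_le he hd))))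
    have h2 := hp1 _ hlt
    change ofLex (UT.key u) (toLex (dd, ii)) = ofLex (UT.key v) (toLex (dd, ii)) at h2
    rw [h2, sub_self, sub_eq_zero] at this
    exact this
  · have := UT.mul_key u v w d i (fun e k he => hp1 (toLex (e, k))
      (Prod.Lex.toLex_lt_toLex.2 (Or.inl he)))
    change ofLex (UT.key u) (toLex (d, i)) < ofLex (UT.key v) (toLex (d, i)) at hp2
    change ofLex (UT.key (u * w)) (toLex (d, i)) < ofLex (UT.key (v * w)) (toLex (d, i))
    omega

theorem UT.uniqueProds (N : ℕ) : UniqueProds (UT N) := by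
  have : MulRightStrictMono (UT N) := ⟨fun w u v h => UT.mul_lt u v w h⟩
  have : TwoUniqueProds (UT N) := TwoUniqueProds.of_covariant_left
  infer_instance

def UT.ball (N l : ℕ) : Set (UT N) :=
  {u | ∀ i j : Fin N, i ≤ j → |(UT.mat u) i j| ≤ (l : ℤ) ^ ((j : ℕ) - i)}

theorem UT.ball_sub {N l : ℕ} {u : UT N} (h : u ∈ UT.ball N l) (i j : Fin N) :
    (UT.mat u) i j ∈ Finset.Icc (-((l : ℤ) + 1) ^ N) (((l : ℤ) + 1) ^ N) := by
  rw [Finset.mem_Icc, ← abs_le]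
  rcases lt_or_ge j i with hij | hij
  · have : (UT.mat u) i j = 0 := u.2.1.1 i j hij
    rw [this, abs_zero]; positivity
  · refine (h i j hij).trans ?_
    calc (l : ℤ) ^ ((j : ℕ) - i) ≤ ((l : ℤ) + 1) ^ ((j : ℕ) - i) := by gcongr; omega
      _ ≤ _ := pow_le_pow_right₀ (by omega) (by omega)

theorem UT.ball_card (N l : ℕ) : (UT.ball N l).Finite ∧
    (UT.ball N l).ncard ≤ 3 ^ (N * N) * (l + 1) ^ (N * (N * N)) := by
  classical
  let S := Fintype.piFinset fun _ : Fin N × Fin N =>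
    Finset.Icc (-((l : ℤ) + 1) ^ N) (((l : ℤ) + 1) ^ N)
  let f : UT N → (Fin N × Fin N → ℤ) := fun u p => (UT.mat u) p.1 p.2
  have hf : Function.Injective f := fun u v h => UT.mat_inj (by
    ext i j; exact congrFun h (i, j))
  have hm : ∀ u ∈ UT.ball N l, f u ∈ (S : Set (Fin N × Fin N → ℤ)) := by
    intro u hu
    simp only [S, Finset.mem_coe, Fintype.mem_piFinset]
    exact fun p => UT.ball_sub hu p.1 p.2
  refine ⟨Set.Finite.of_injOn hm hf.injOn S.finite_toSet, ?_⟩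
  refine (Set.ncard_le_ncard_of_injOn f hm hf.injOn S.finite_toSet).trans ?_
  rw [Set.ncard_coe_finset, Fintype.card_piFinset]
  simp only [Finset.prod_const, Finset.card_univ, Fintype.card_prod, Fintype.card_fin, Int.card_Icc]
  rw [pow_mul (l + 1), ← mul_pow]
  refine Nat.pow_le_pow_left ?_ _
  have : (1 : ℤ) ≤ ((l : ℤ) + 1) ^ N := one_le_pow₀ (by omega)
  zify
  rw [Int.toNat_of_nonneg (by omega)]
  omega

theorem UT.ball_mul {N a b : ℕ} {u v : UT N} (hu : u ∈ UT.ball N a) (hv : v ∈ UT.ball N b) :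
    u * v ∈ UT.ball N (a + b) := by
  classical
  intro i j hij
  have hij' : (i : ℕ) ≤ j := hij
  rw [UT.mat_mul, Matrix.mul_apply]
  refine (Finset.abs_sum_le_sum_abs _ _).trans ?_
  have h1 : ∀ k : Fin N, |(UT.mat u) i k * (UT.mat v) k j| ≤
      if i ≤ k ∧ k ≤ j then (a : ℤ) ^ ((k : ℕ) - i) * (b : ℤ) ^ (((j : ℕ) - i) - (k - i)) else 0 := by
    intro k
    split_ifs with h
    · rw [abs_mul]
      have e : ((j : ℕ) - i) - (k - i) = j - k := by
        have := Fin.le_def.1 h.1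
        have := Fin.le_def.1 h.2
        omega
      rw [e]
      exact mul_le_mul (hu i k h.1) (hv k j h.2) (abs_nonneg _) (by positivity)
    · rw [not_and_or, not_le, not_le] at h
      rcases h with h | h
      · have : (UT.mat u) i k = 0 := u.2.1.1 _ _ h
        simp [this]
      · have : (UT.mat v) k j = 0 := v.2.1.1 _ _ h
        simp [this]
  refine (Finset.sum_le_sum fun k _ => h1 k).trans ?_
  rw [← Finset.sum_filter]
  have h2 : Set.InjOn (fun k : Fin N => (k : ℕ) - i)
      ((Finset.univ.filter fun k : Fin N => i ≤ k ∧ k ≤ j : Finset (Fin N)) : Set (Fin N)) := by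
    intro k hk k' hk' h
    simp only [Finset.coe_filter, Finset.mem_univ, true_and, Set.mem_ofPred_eq, Fin.le_def] at *
    exact Fin.ext (by omega)
  rw [← Finset.sum_image (f := fun t : ℕ => (a : ℤ) ^ t * (b : ℤ) ^ (((j : ℕ) - i) - t)) h2]
  calc _ ≤ ∑ t ∈ Finset.range ((j : ℕ) - i + 1), (a : ℤ) ^ t * (b : ℤ) ^ (((j : ℕ) - i) - t) := by
        apply Finset.sum_le_sum_of_subset_of_nonneg
        · intro t ht
          simp only [Finset.mem_image, Finset.mem_filter, Finset.mem_univ, true_and,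
            Fin.le_def] at ht
          obtain ⟨k, hk, rfl⟩ := ht
          rw [Finset.mem_range]; omega
        · intros; positivity
    _ ≤ _ := by
        push_cast
        rw [add_pow]
        apply Finset.sum_le_sum
        intro t ht
        rw [Finset.mem_range] at ht
        have : (1 : ℤ) ≤ (((j : ℕ) - (i : ℕ)).choose t : ℕ) := by
          exact_mod_cast Nat.choose_pos (by omega)
        exact le_mul_of_one_le_right (by positivity) this

theorem UT.good (N : ℕ) : GoodGroup (UT N) := by
  refine ⟨UT.uniqueProds N, fun l => (UT.ball_card N l).1.toFinset, ?_, ?_, ?_,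
    3 ^ (N * N), N * (N * N), ?_⟩
  · intro u
    refine ⟨∑ i, ∑ j, ((UT.mat u) i j).natAbs, ?_⟩
    rw [Set.Finite.mem_toFinset]
    intro i j hij
    rcases eq_or_lt_of_le hij with rfl | h
    · have : (UT.mat u) i i = 1 := u.2.1.2 i
      simp [this]
    · have h0 : ((UT.mat u) i j).natAbs ≤ ∑ i, ∑ j, ((UT.mat u) i j).natAbs :=
        (Finset.single_le_sum (f := fun j => ((UT.mat u) i j).natAbs) (fun _ _ => Nat.zero_le _)
          (Finset.mem_univ j)).trans
        (Finset.single_le_sum (f := fun i => ∑ j, ((UT.mat u) i j).natAbs) (fun _ _ => Nat.zero_le _)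
          (Finset.mem_univ i))
      generalize (∑ i, ∑ j, ((UT.mat u) i j).natAbs) = s at *
      rw [Int.abs_eq_natAbs]
      have h1 : (j : ℕ) - i ≠ 0 := by
        have := Fin.lt_def.1 h
        omega
      exact_mod_cast h0.trans (Nat.le_self_pow h1 s)
  · intro a b hab u hu
    simp only [Set.Finite.mem_toFinset] at *
    intro i j hij
    exact (hu i j hij).trans (by gcongr)
  · intro a b x y hx hy
    simp only [Set.Finite.mem_toFinset] at *
    exact UT.ball_mul hx hy
  · intro l
    rw [← Set.ncard_eq_toFinset_card _ (UT.ball_card N l).1]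
    exact (UT.ball_card N l).2

theorem freeGroup_syllables {α : Type} (g : FreeGroup α) (hg : g ≠ 1) :
    ∃ L : List (α × ℤ), L ≠ [] ∧ (∀ p ∈ L, p.2 ≠ 0) ∧ L.IsChain (fun p q => p.1 ≠ q.1) ∧
      g = (L.map fun p => FreeGroup.of p.1 ^ p.2).prod := by
  classical
  let M : α → Type := fun _ => Multiplicative ℤ
  let η : FreeGroup α →* Monoid.CoprodI M :=
    FreeGroup.lift fun i => Monoid.CoprodI.of (M := M) (i := i) (Multiplicative.ofAdd (1 : ℤ))
  let θ : Monoid.CoprodI M →* FreeGroup α :=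
    Monoid.CoprodI.lift fun i => zpowersHom (FreeGroup α) (FreeGroup.of i)
  have hθη : ∀ x, θ (η x) = x := by
    have : θ.comp η = MonoidHom.id _ := by
      ext i
      simp only [θ, η, MonoidHom.comp_apply, FreeGroup.lift_apply_of, Monoid.CoprodI.lift_of]
      exact (zpowersHom_apply _ _ _).trans (zpow_one _)
    exact fun x => DFunLike.congr_fun this x
  let w : Monoid.CoprodI.Word M := Monoid.CoprodI.Word.equiv (η g)
  have hw : w.prod = η g := Monoid.CoprodI.Word.equiv.symm_apply_apply (η g)
  refine ⟨w.toList.map fun p => (p.1, Multiplicative.toAdd p.2), ?_, ?_, ?_, ?_⟩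
  · intro h
    apply hg
    rw [← hθη g, ← hw, Monoid.CoprodI.Word.prod, List.map_eq_nil_iff.1 h]
    simp
  · intro p hp
    obtain ⟨q, hq, rfl⟩ := List.mem_map.1 hp
    exact fun h => w.ne_one q hq h
  · rw [List.isChain_map]
    exact w.chain_ne
  · conv_lhs => rw [← hθη g, ← hw, Monoid.CoprodI.Word.prod, map_list_prod]
    rw [List.map_map, List.map_map]
    congr 1

theorem freeGroup_residually {α : Type} (g : FreeGroup α) (hg : g ≠ 1) :
    ∃ (N : ℕ) (ρ : FreeGroup α →* UT N), ρ g ≠ 1 := by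
  classical
  obtain ⟨L, hL, hne, hch, hprod⟩ := freeGroup_syllables g hg
  let N := L.length + 1
  let X : α → Matrix (Fin N) (Fin N) ℤ := fun i => Matrix.of fun a b =>
    if (b : ℕ) = a + 1 ∧ (L[(a : ℕ)]?).map Prod.fst = some i then 1 else 0
  have hX : ∀ i, X i * X i = 0 := by
    intro i
    ext a b
    rw [Matrix.mul_apply, Matrix.zero_apply]
    apply Finset.sum_eq_zero
    intro c _
    simp only [X, Matrix.of_apply]
    by_contra hcon
    have h1 : (c : ℕ) = a + 1 ∧ (L[(a : ℕ)]?).map Prod.fst = some i := by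
      by_contra h; rw [if_neg h, zero_mul] at hcon; exact hcon rfl
    have h2 : (b : ℕ) = c + 1 ∧ (L[(c : ℕ)]?).map Prod.fst = some i := by
      by_contra h; rw [if_neg h, mul_zero] at hcon; exact hcon rfl
    obtain ⟨p, hp, hp'⟩ := Option.map_eq_some_iff.1 h1.2
    obtain ⟨q, hq, hq'⟩ := Option.map_eq_some_iff.1 h2.2
    rw [h1.1] at hq
    obtain ⟨ha, rfl⟩ := List.getElem?_eq_some_iff.1 hp
    obtain ⟨hc, rfl⟩ := List.getElem?_eq_some_iff.1 hq
    exact List.isChain_iff_getElem.1 hch a hc (hp'.trans hq'.symm)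
  let E : α → Multiplicative ℤ →* Matrix (Fin N) (Fin N) ℤ := fun i =>
    { toFun := fun e => 1 + (Multiplicative.toAdd e) • X i
      map_one' := by simp
      map_mul' := by
        intro x y
        rw [add_mul, one_mul, mul_add, mul_one, smul_mul_smul_comm, hX, smul_zero, add_zero,
          toAdd_mul, add_smul]
        abel }
  have hUT : ∀ i e, IsUT (E i e) := by
    intro i e
    constructor
    · intro a b hab
      have : (b : ℕ) < a := hab
      change (1 : Matrix (Fin N) (Fin N) ℤ) a b + Multiplicative.toAdd e • X i a b = 0
      rw [Matrix.one_apply_ne hab.ne']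
      simp only [X, Matrix.of_apply]
      rw [if_neg (by omega), smul_zero, add_zero]
    · intro a
      change (1 : Matrix (Fin N) (Fin N) ℤ) a a + Multiplicative.toAdd e • X i a a = 1
      rw [Matrix.one_apply_eq]
      simp only [X, Matrix.of_apply]
      rw [if_neg (by omega), smul_zero, add_zero]
  let ρ : FreeGroup α →* UT N := FreeGroup.lift fun i =>
    ⟨(E i).toHomUnits (Multiplicative.ofAdd 1), hUT i _, hUT i (Multiplicative.ofAdd 1)⁻¹⟩
  have hρ : ∀ i (e : ℤ), UT.mat (ρ (FreeGroup.of i ^ e)) = 1 + e • X i := by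
    intro i e
    have : ((ρ (FreeGroup.of i ^ e) : UT N) : (Matrix (Fin N) (Fin N) ℤ)ˣ) =
        (E i).toHomUnits (Multiplicative.ofAdd e) := by
      rw [map_zpow, Subgroup.coe_zpow]
      simp only [ρ, FreeGroup.lift_apply_of]
      rw [← map_zpow, ← ofAdd_zsmul, smul_eq_mul, mul_one]
    unfold UT.mat
    rw [this]
    rfl
  let P : ℕ → Matrix (Fin N) (Fin N) ℤ := fun k =>
    UT.mat (ρ (((L.take k).map fun p => FreeGroup.of p.1 ^ p.2).prod))
  have key : ∀ k, k ≤ L.length → (∀ b : Fin N, k < b → P k 0 b = 0) ∧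
      ∀ b : Fin N, (b : ℕ) = k → P k 0 b ≠ 0 := by
    intro k
    induction k with
    | zero =>
      intro _
      have : P 0 = 1 := by
        simp only [P, List.take_zero, List.map_nil, List.prod_nil, map_one]
        rfl
      rw [this]
      constructor
      · intro b hb
        apply Matrix.one_apply_ne
        intro h
        rw [← h] at hb
        simp at hb
      · intro b hb
        have : b = 0 := Fin.ext hb
        rw [this, Matrix.one_apply_eq]
        exact one_ne_zero
    | succ k ih =>
      intro hk
      obtain ⟨ih1, ih2⟩ := ih (by omega)
      have hk' : k < L.length := by omega
      have hP : P (k + 1) = P k * (1 + L[k].2 • X L[k].1) := by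
        simp only [P]
        rw [List.take_succ_eq_append_getElem hk', List.map_append, List.prod_append, map_mul,
          UT.mat_mul]
        rw [List.map_singleton, List.prod_singleton, hρ]
      have hP' : ∀ a b : Fin N, (b : ℕ) = a + 1 → P (k + 1) 0 b = P k 0 b +
          P k 0 a * (L[k].2 * X L[k].1 a b) := by
        intro a b hab
        rw [hP, mul_add, mul_one, Matrix.add_apply, Matrix.mul_apply, Finset.sum_eq_single a]
        · rw [Matrix.smul_apply, smul_eq_mul]
        · intro c _ hc
          rw [Matrix.smul_apply]
          simp only [X, Matrix.of_apply]
          rw [if_neg, smul_zero, mul_zero]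
          rintro ⟨h, _⟩
          exact hc (Fin.ext (by omega))
        · simp
      constructor
      · intro b hb
        have hb' : (b : ℕ) - 1 < N := by omega
        rw [hP' ⟨b - 1, hb'⟩ b (by simp; omega), ih1 b (by omega), ih1 _ (by simp; omega)]
        simp
      · intro b hb
        have hb' : k < N := by omega
        rw [hP' ⟨k, hb'⟩ b hb, ih1 b (by omega), zero_add]
        refine mul_ne_zero (ih2 _ rfl) (mul_ne_zero (hne _ (List.getElem_mem hk')) ?_)
        simp only [X, Matrix.of_apply]
        rw [if_pos]
        · exact one_ne_zero
        · refine ⟨hb, ?_⟩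
          rw [List.getElem?_eq_getElem hk']
          rfl
  refine ⟨N, ρ, fun h => ?_⟩
  have h1 := (key L.length le_rfl).2 (Fin.last _) rfl
  simp only [P, List.take_length] at h1
  rw [← hprod, h] at h1
  apply h1
  change (1 : Matrix (Fin N) (Fin N) ℤ) 0 (Fin.last _) = 0
  apply Matrix.one_apply_ne
  intro h2
  have := congrArg Fin.val h2
  simp at this
  exact hL (List.length_eq_zero_iff.1 this.symm)

/-- A finite set in a free group can be separated in a good quotient. -/
theorem freeGroup_separate {α : Type} (S : Finset (FreeGroup α)) :
    ∃ (Q : Type) (_ : Group Q) (ρ : FreeGroup α →* Q), GoodGroup Q ∧ Set.InjOn ρ S := by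
  classical
  choose N ρ hρ using fun g : {g : FreeGroup α // g ≠ 1} => freeGroup_residually g.1 g.2
  let I := {p : S × S // p.1.1⁻¹ * p.2.1 ≠ 1}
  let Q : I → Type := fun p => UT (N ⟨_, p.2⟩)
  refine ⟨∀ p : I, UT (N ⟨_, p.2⟩), inferInstance, MonoidHom.mk' (fun g p => ρ ⟨_, p.2⟩ g) ?_,
    GoodGroup.pi _ fun _ => UT.good _, ?_⟩
  · intro a b
    ext1 p
    simp
  · intro a ha b hb hab
    by_contra hne
    have h : a⁻¹ * b ≠ 1 := fun h => hne (inv_mul_eq_one.1 h)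
    have := congrFun hab ⟨(⟨a, ha⟩, ⟨b, hb⟩), h⟩
    apply hρ ⟨_, h⟩
    simp only [MonoidHom.mk'_apply] at this
    rw [map_mul, map_inv, inv_mul_eq_one]
    exact this

theorem exists_growth_bound (C c l0 d m : ℕ) (f : ℕ → ℕ) (h0 : 1 ≤ f l0)
    (hf : ∀ l, f l ≤ C * (l + 1) ^ d) (hstep : ∀ l, (m + 1) * f l ≤ m * f (l + c)) : False := by
  have h1 : ∀ k : ℕ, (m + 1) ^ k ≤ m ^ k * f (l0 + k * c) := by
    intro k
    induction k with
    | zero => simpa using h0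
    | succ k ih =>
      calc (m + 1) ^ (k + 1) = (m + 1) ^ k * (m + 1) := pow_succ _ _
        _ ≤ (m ^ k * f (l0 + k * c)) * (m + 1) := Nat.mul_le_mul_right _ ih
        _ = m ^ k * ((m + 1) * f (l0 + k * c)) := by ring
        _ ≤ m ^ k * (m * f (l0 + k * c + c)) := Nat.mul_le_mul_left _ (hstep _)
        _ = m ^ (k + 1) * f (l0 + (k + 1) * c) := by
          rw [show l0 + (k + 1) * c = l0 + k * c + c by ring]; ring
  let r : ℝ := (m : ℝ) / (m + 1)
  have hr0 : 0 ≤ r := by positivity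
  have hr1 : r < 1 := by
    rw [div_lt_one (by positivity)]; linarith
  let K : ℝ := C * (c + l0 + 1 : ℝ) ^ d
  have h2 : ∀ k : ℕ, 1 ≤ k → 1 ≤ K * ((k : ℝ) ^ d * r ^ k) := by
    intro k hk
    have h3 : f (l0 + k * c) ≤ C * (k * (c + l0 + 1)) ^ d := by
      refine (hf _).trans ?_
      gcongr
      nlinarith
    have h4 : (m + 1) ^ k ≤ m ^ k * (C * (k * (c + l0 + 1)) ^ d) :=
      (h1 k).trans (Nat.mul_le_mul_left _ h3)
    have h5 : ((m : ℝ) + 1) ^ k ≤ m ^ k * (C * (k * (c + l0 + 1)) ^ d) := by exact_mod_cast h4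
    have h6 : (0 : ℝ) < ((m : ℝ) + 1) ^ k := by positivity
    have h7 : K * ((k : ℝ) ^ d * r ^ k) = m ^ k * (C * (k * (c + l0 + 1)) ^ d) / ((m : ℝ) + 1) ^ k := by
      simp only [K, r]
      rw [div_pow, mul_pow]
      ring
    rw [h7, le_div_iff₀ h6, one_mul]
    exact h5
  have h3 := (tendsto_pow_const_mul_const_pow_of_lt_one d hr0 hr1).const_mul K
  rw [mul_zero] at h3
  have h4 := (h3.eventually_lt_const (show (0 : ℝ) < 1 by norm_num)).and (Filter.eventually_ge_atTop 1)
  obtain ⟨k, hk1, hk2⟩ := h4.exists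
  exact absurd (h2 k hk2) (not_le.2 hk1)

theorem GoodGroup.src {Q : Type} [Group Q] (h : GoodGroup Q) :
    StrongRankCondition (MonoidAlgebra ℤ Q) := by
  classical
  obtain ⟨B, hB1, hB2, hB3, C, d, hB4⟩ := h.growth
  let R := MonoidAlgebra ℤ Q
  let T : ℕ → R → Prop := fun l r => ∀ q, r.coeff q ≠ 0 → q ∈ B l
  have hT : ∀ r : R, ∃ l, T l r := by
    intro r
    choose l hl using hB1
    refine ⟨r.coeff.support.sup l, fun q hq => ?_⟩
    exact hB2 (Finset.le_sup (f := l) (Finsupp.mem_support_iff.2 hq)) (hl q)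
  have hTmono : ∀ a b r, a ≤ b → T a r → T b r := fun a b r hab hr q hq => hB2 hab (hr q hq)
  have hTmul : ∀ a b r s, T a r → T b s → T (a + b) (r * s) := by
    intro a b r s hr hs q hq
    have : q ∈ (r * s).coeff.support := Finsupp.mem_support_iff.2 hq
    have := MonoidAlgebra.support_coeff_mul_subset r s this
    obtain ⟨x, hx, y, hy, rfl⟩ := Finset.mem_mul.1 this
    exact hB3 _ _ _ _ (hr x (Finsupp.mem_support_iff.1 hx)) (hs y (Finsupp.mem_support_iff.1 hy))
  have hTsum : ∀ (ι : Type) (s : Finset ι) (l : ℕ) (f : ι → R), (∀ i ∈ s, T l (f i)) →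
      T l (∑ i ∈ s, f i) := by
    intro ι s l f hf q hq
    rw [MonoidAlgebra.coeff_sum, Finsupp.finsetSum_apply] at hq
    obtain ⟨i, hi, hi'⟩ := Finset.exists_ne_zero_of_sum_ne_zero hq
    exact hf i hi q hi'
  refine ⟨fun {n m} f hf => ?_⟩
  by_contra hnm
  have hnm' : m + 1 ≤ n := by omega
  choose L hL using hT
  let c := ∑ i : Fin n, ∑ j : Fin m, L (f (Pi.single i 1) j)
  have hc : ∀ i j, T c (f (Pi.single i 1) j) := by
    intro i j
    refine hTmono _ _ _ ?_ (hL _)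
    exact (Finset.single_le_sum (f := fun j => L (f (Pi.single i 1) j)) (fun _ _ => Nat.zero_le _)
          (Finset.mem_univ j)).trans
        (Finset.single_le_sum (f := fun i => ∑ j, L (f (Pi.single i 1) j))
          (fun _ _ => Nat.zero_le _) (Finset.mem_univ i))
  have hfx : ∀ (l : ℕ) (x : Fin n → R), (∀ i, T l (x i)) → ∀ j, T (l + c) (f x j) := by
    intro l x hx j
    have : f x = ∑ i, x i • f (Pi.single i 1) := by
      conv_lhs => rw [pi_eq_sum_univ' x, map_sum]
      apply Finset.sum_congr rfl
      intro i _
      rw [← map_smul]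
    rw [this, Finset.sum_apply]
    apply hTsum
    intro i _
    exact hTmul _ _ _ _ (hx i) (hc i j)
  obtain ⟨l0, hl0⟩ := hB1 1
  refine exists_growth_bound C c l0 d m (fun l => (B l).card) (Finset.card_pos.2 ⟨1, hl0⟩) hB4 ?_
  intro l
  let Φ : (Fin n × B l → ℤ) →+ (Fin n → R) :=
    { toFun := fun x i => ∑ q : B l, MonoidAlgebra.single q.1 (x (i, q))
      map_zero' := by
        ext1 i
        simp
      map_add' := by
        intro x y
        ext1 i
        simp only [Pi.add_apply, MonoidAlgebra.single_add, Finset.sum_add_distrib] }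
  have hΦc : ∀ x i (q : B l), (Φ x i).coeff q.1 = x (i, q) := by
    intro x i q
    change (∑ q : B l, MonoidAlgebra.single q.1 (x (i, q)) : R).coeff q.1 = _
    rw [MonoidAlgebra.coeff_sum, Finsupp.finsetSum_apply, Finset.sum_eq_single q]
    · simp
    · intro b _ hb
      rw [MonoidAlgebra.coeff_single, Finsupp.single_apply, if_neg]
      exact fun h => hb (Subtype.ext h)
    · simp
  have hΦT : ∀ x i, T l (Φ x i) := by
    intro x i
    apply hTsum
    intro q _ q' hq'
    rw [MonoidAlgebra.coeff_single, Finsupp.single_apply] at hq'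
    have : q.1 = q' := by
      by_contra h; rw [if_neg h] at hq'; exact hq' rfl
    exact this ▸ q.2
  let A : (Fin n × B l → ℤ) →+ (Fin m × B (l + c) → ℤ) :=
    { toFun := fun x p => (f (Φ x) p.1).coeff p.2.1
      map_zero' := by
        ext1 i
        simp
      map_add' := by
        intro x y
        ext1 p
        simp only [map_add, Pi.add_apply, MonoidAlgebra.coeff_add, Finsupp.add_apply] }
  have hA : Function.Injective A := by
    rw [injective_iff_map_eq_zero]
    intro x hx
    have h1 : f (Φ x) = 0 := by
      ext1 j
      apply MonoidAlgebra.ext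
      ext q
      by_contra hq
      have hq' : q ∈ B (l + c) := hfx l (Φ x) (hΦT x) j q hq
      exact hq (congrFun hx (j, ⟨q, hq'⟩))
    have h2 : Φ x = 0 := hf (h1.trans (map_zero f).symm)
    ext ⟨i, q⟩
    rw [← hΦc x i q, h2]
    rfl
  have := card_le_of_injective ℤ A.toIntLinearMap hA
  simp only [Fintype.card_prod, Fintype.card_fin, Fintype.card_coe] at this
  exact (Nat.mul_le_mul_right _ hnm').trans this

/-- Crossed homomorphisms. -/
def IsCrossed {G E : Type*} [Group G] [AddCommGroup E] (A : G →* AddMonoid.End E) (δ : G → E) :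
    Prop := ∀ g h, δ (g * h) = δ g + A g (δ h)

theorem IsCrossed.map_one {G E : Type*} [Group G] [AddCommGroup E] {A : G →* AddMonoid.End E}
    {δ : G → E} (h : IsCrossed A δ) : δ 1 = 0 := by
  have := h 1 1
  rw [mul_one, _root_.map_one A, AddMonoid.End.one_apply] at this
  exact left_eq_add.1 this

theorem IsCrossed.map_inv {G E : Type*} [Group G] [AddCommGroup E] {A : G →* AddMonoid.End E}
    {δ : G → E} (h : IsCrossed A δ) (g : G) : δ g⁻¹ = - A g⁻¹ (δ g) := by
  have := h g⁻¹ g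
  rw [inv_mul_cancel, h.map_one] at this
  exact eq_neg_of_add_eq_zero_left this.symm

theorem addEnd_mul_apply {E : Type*} [AddCommGroup E] (f g : AddMonoid.End E) (x : E) :
    (f * g) x = f (g x) := rfl

theorem IsCrossed.unique {ι : Type*} {E : Type*} [AddCommGroup E]
    {A : FreeGroup ι →* AddMonoid.End E} {δ ε : FreeGroup ι → E} (h : IsCrossed A δ)
    (h' : IsCrossed A ε) (e : ∀ i, δ (FreeGroup.of i) = ε (FreeGroup.of i)) (g : FreeGroup ι) :
    δ g = ε g := by
  induction g using FreeGroup.induction_on with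
  | C1 => rw [h.map_one, h'.map_one]
  | of i => exact e i
  | inv_of i hi => rw [h.map_inv, h'.map_inv, hi]
  | mul x y hx hy => rw [h, h', hx, hy]

theorem crossed_exists {ι : Type*} {E : Type*} [AddCommGroup E]
    (A : FreeGroup ι →* AddMonoid.End E) (f : ι → E) :
    ∃ δ : FreeGroup ι → E, IsCrossed A δ ∧ ∀ i, δ (FreeGroup.of i) = f i := by
  have hA : ∀ g e, A g⁻¹ (A g e) = e := by
    intro g e
    rw [← addEnd_mul_apply, ← map_mul, inv_mul_cancel, map_one, AddMonoid.End.one_apply]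
  have hA' : ∀ g e, A g (A g⁻¹ e) = e := by
    intro g e
    rw [← addEnd_mul_apply, ← map_mul, mul_inv_cancel, map_one, AddMonoid.End.one_apply]
  let P : ι → Equiv.Perm E := fun i =>
    { toFun := fun e => f i + A (FreeGroup.of i) e
      invFun := fun e => A (FreeGroup.of i)⁻¹ (e - f i)
      left_inv := by intro e; simp [hA]
      right_inv := by intro e; simp only [hA']; abel }
  let Φ := FreeGroup.lift P
  have hΦ : ∀ g e, Φ g e = Φ g 0 + A g e := by
    intro g
    induction g using FreeGroup.induction_on with
    | C1 => simp
    | of i => intro e; simp [Φ, P]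
    | inv_of i hi =>
      intro e
      rw [map_inv, Equiv.Perm.inv_def]
      rw [Equiv.symm_apply_eq, hi, map_add, hA', ← add_assoc, ← hi, Equiv.apply_symm_apply, zero_add]
    | mul x y hx hy =>
      intro e
      rw [map_mul, Equiv.Perm.mul_apply, Equiv.Perm.mul_apply, hy, hx, hx (Φ y 0), map_mul,
        addEnd_mul_apply, map_add, add_assoc]
  refine ⟨fun g => Φ g 0, fun g h => ?_, fun i => ?_⟩
  · simp only []
    rw [map_mul, Equiv.Perm.mul_apply, hΦ g]
  · simp [Φ, P]

theorem crossed_exists_basis {ι : Type*} {G E : Type*} [Group G] [AddCommGroup E]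
    (b : FreeGroupBasis ι G) (A : G →* AddMonoid.End E) (f : ι → E) :
    ∃ δ : G → E, IsCrossed A δ ∧ ∀ i, δ (b i) = f i := by
  obtain ⟨δ, h1, h2⟩ := crossed_exists (A.comp b.repr.symm.toMonoidHom) f
  refine ⟨fun g => δ (b.repr g), fun g h => ?_, fun i => ?_⟩
  · simp only [map_mul]
    rw [h1]
    simp
  · simp only [FreeGroupBasis.repr_apply_coe]
    exact h2 i

section rt
variable {F V Q : Type} [Group F] [MulAction F V] [Group Q] (ρ : F →* Q)

/-- right translation operator -/
noncomputable def rt (g : F) : (V →₀ MonoidAlgebra ℤ Q) →ₗ[MonoidAlgebra ℤ Q] (V →₀ MonoidAlgebra ℤ Q) :=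
  Finsupp.mapRange.linearMap (LinearMap.toSpanSingleton (MonoidAlgebra ℤ Q) (MonoidAlgebra ℤ Q)
    (MonoidAlgebra.single (ρ g) 1)) ∘ₗ
    (Finsupp.domLCongr (MulAction.toPerm g⁻¹ : Equiv.Perm V)).toLinearMap

theorem rt_single (g : F) (v : V) (a : MonoidAlgebra ℤ Q) :
    rt ρ g (Finsupp.single v a) = Finsupp.single (g⁻¹ • v) (a * MonoidAlgebra.single (ρ g) 1) := by
  simp [rt]

theorem rt_apply (g : F) (u : V →₀ MonoidAlgebra ℤ Q) (v : V) :
    rt ρ g u v = u (g • v) * MonoidAlgebra.single (ρ g) 1 := by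
  simp [rt, Finsupp.domLCongr_apply]

theorem rt_one : rt (V := V) ρ 1 = LinearMap.id := by
  ext1 v
  ext1
  simp [rt_single, MonoidAlgebra.one_def]

theorem rt_mul (g h : F) : rt (V := V) ρ (g * h) = rt ρ h ∘ₗ rt ρ g := by
  ext1 v
  ext1
  simp [rt_single, mul_smul, MonoidAlgebra.single_mul_single]

/-- precomposition with right translations -/
noncomputable def precomp (V : Type) [MulAction F V] (W : Type) [AddCommGroup W] [Module (MonoidAlgebra ℤ Q) W] :
    F →* AddMonoid.End ((V →₀ MonoidAlgebra ℤ Q) →ₗ[MonoidAlgebra ℤ Q] W) where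
  toFun g :=
    { toFun := fun T => T ∘ₗ rt ρ g
      map_zero' := LinearMap.zero_comp _
      map_add' := fun _ _ => LinearMap.add_comp _ _ _ }
  map_one' := by
    ext1 T
    change T ∘ₗ rt ρ 1 = T
    rw [rt_one, LinearMap.comp_id]
  map_mul' g h := by
    ext1 T
    change T ∘ₗ rt ρ (g * h) = (T ∘ₗ rt ρ h) ∘ₗ rt ρ g
    rw [rt_mul, LinearMap.comp_assoc]

theorem precomp_apply (W : Type) [AddCommGroup W] [Module (MonoidAlgebra ℤ Q) W] (g : F)
    (T : (V →₀ MonoidAlgebra ℤ Q) →ₗ[MonoidAlgebra ℤ Q] W) (u : V →₀ MonoidAlgebra ℤ Q) :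
    precomp ρ V W g T u = T (rt ρ g u) := rfl

/-- left multiplication -/
noncomputable def lmulA {C : Type} [Group C] (σ : C →* Q) : C →* AddMonoid.End (MonoidAlgebra ℤ Q) :=
  { toFun := fun c => AddMonoidHom.mulLeft (MonoidAlgebra.single (σ c) 1)
    map_one' := by
      refine AddMonoidHom.ext fun x => ?_
      change MonoidAlgebra.single (σ 1) 1 * x = x
      rw [map_one, ← MonoidAlgebra.one_def, one_mul]
    map_mul' := fun c d => by
      refine AddMonoidHom.ext fun x => ?_
      change MonoidAlgebra.single (σ (c * d)) 1 * x =
        MonoidAlgebra.single (σ c) 1 * (MonoidAlgebra.single (σ d) 1 * x)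
      rw [← mul_assoc, MonoidAlgebra.single_mul_single, map_mul, mul_one] }

theorem lmulA_apply {C : Type} [Group C] (σ : C →* Q) (c : C) (x : MonoidAlgebra ℤ Q) :
    lmulA σ c x = MonoidAlgebra.single (σ c) 1 * x := rfl

end rt

section main
variable {F V Q : Type} [Group F] [MulAction F V] [Group Q] (ρ : F →* Q)

theorem dual_functional {β : Type} [Fintype β] [DecidableEq β] (ψ : FreeGroup β →* F) (v0 : V)
    (C : Subgroup F) (hC : ∀ c, c ∈ C ↔ c ∈ ψ.range ∧ c • v0 = v0)
    (δ : C → MonoidAlgebra ℤ Q) (hδ : IsCrossed (lmulA (ρ.comp C.subtype)) δ)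
    (Θ' : FreeGroup β → ((V →₀ MonoidAlgebra ℤ Q) →ₗ[MonoidAlgebra ℤ Q] (β → (V →₀ MonoidAlgebra ℤ Q))))
    (hΘ' : IsCrossed ((precomp ρ V (β → (V →₀ MonoidAlgebra ℤ Q))).comp ψ) Θ')
    (hof : ∀ b, Θ' (FreeGroup.of b) = LinearMap.single (MonoidAlgebra ℤ Q) (fun _ => V →₀ MonoidAlgebra ℤ Q) b) :
    ∃ L : (β → (V →₀ MonoidAlgebra ℤ Q)) →ₗ[MonoidAlgebra ℤ Q] MonoidAlgebra ℤ Q,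
      ∀ (h : FreeGroup β) (hh : ψ h ∈ C), L (Θ' h (Finsupp.single v0 1)) = δ ⟨ψ h, hh⟩ := by
  classical
  have ht : ∀ v : V, ∃ t : F, t ∈ ψ.range ∧ ((∃ g ∈ ψ.range, g • v = v0) → t • v = v0) ∧
      (v = v0 → t = 1) := by
    intro v
    by_cases hv : v = v0
    · exact ⟨1, one_mem _, fun _ => by simpa using hv, fun _ => rfl⟩
    · by_cases h : ∃ g ∈ ψ.range, g • v = v0
      · obtain ⟨g, hg, hgv⟩ := h
        exact ⟨g, hg, fun _ => hgv, fun h => absurd h hv⟩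
      · exact ⟨1, one_mem _, fun h' => absurd h' h, fun h => absurd h hv⟩
  choose t ht1 ht2 ht3 using ht
  let dh : F → MonoidAlgebra ℤ Q := fun c => if h : c ∈ C then δ ⟨c, h⟩ else 0
  have dh_eq : ∀ c (h : c ∈ C), dh c = δ ⟨c, h⟩ := fun c h => dif_pos h
  have dh_mul : ∀ c d, c ∈ C → d ∈ C → dh (c * d) = dh c + MonoidAlgebra.single (ρ c) 1 * dh d := by
    intro c d hc hd
    rw [dh_eq c hc, dh_eq d hd, dh_eq _ (mul_mem hc hd)]
    exact hδ ⟨c, hc⟩ ⟨d, hd⟩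
  let κ : FreeGroup β → V → MonoidAlgebra ℤ Q := fun h v =>
    MonoidAlgebra.single (ρ (t v))⁻¹ 1 * dh (t v * ψ h * (t ((ψ h)⁻¹ • v))⁻¹)
  let orb : V → Prop := fun v => ∃ g ∈ ψ.range, g • v = v0
  have orb_smul : ∀ v h, orb v → orb ((ψ h)⁻¹ • v) := by
    rintro v h ⟨g, hg, rfl⟩
    exact ⟨g * ψ h, mul_mem hg ⟨h, rfl⟩, by rw [mul_smul, smul_inv_smul]⟩
  have memC : ∀ v h, orb v → t v * ψ h * (t ((ψ h)⁻¹ • v))⁻¹ ∈ C := by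
    intro v h hv
    rw [hC]
    refine ⟨mul_mem (mul_mem (ht1 _) ⟨h, rfl⟩) (inv_mem (ht1 _)), ?_⟩
    have h1 := ht2 _ (orb_smul v h hv)
    have h2 : (t ((ψ h)⁻¹ • v))⁻¹ • v0 = (ψ h)⁻¹ • v := by
      rw [inv_smul_eq_iff, h1]
    rw [mul_smul, h2, mul_smul, smul_inv_smul]
    exact ht2 _ hv
  have hκ : ∀ g h v, orb v → κ (g * h) v = κ g v + MonoidAlgebra.single (ρ (ψ g)) 1 * κ h ((ψ g)⁻¹ • v) := by
    intro g h v hv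
    have e : t v * ψ (g * h) * (t ((ψ (g * h))⁻¹ • v))⁻¹ =
      (t v * ψ g * (t ((ψ g)⁻¹ • v))⁻¹) *
        (t ((ψ g)⁻¹ • v) * ψ h * (t ((ψ h)⁻¹ • (ψ g)⁻¹ • v))⁻¹) := by
      rw [map_mul, mul_inv_rev, mul_smul]; group
    simp only [κ]
    rw [e, dh_mul _ _ (memC v g hv) (memC _ h (orb_smul v g hv)), mul_add, ← mul_assoc, ← mul_assoc,
      MonoidAlgebra.single_mul_single, MonoidAlgebra.single_mul_single]
    congr 3
    simp only [map_mul, map_inv]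
    rw [← mul_assoc, ← mul_assoc, inv_mul_cancel, one_mul]
  let L : (β → (V →₀ MonoidAlgebra ℤ Q)) →ₗ[MonoidAlgebra ℤ Q] MonoidAlgebra ℤ Q :=
    ∑ b, Finsupp.linearCombination (MonoidAlgebra ℤ Q) (κ (FreeGroup.of b)) ∘ₗ LinearMap.proj b
  let κ' : FreeGroup β → V → MonoidAlgebra ℤ Q := fun h v => L (Θ' h (Finsupp.single v 1))
  have hκ' : ∀ g h v, κ' (g * h) v = κ' g v + MonoidAlgebra.single (ρ (ψ g)) 1 * κ' h ((ψ g)⁻¹ • v) := by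
    intro g h v
    simp only [κ']
    rw [hΘ' g h, LinearMap.add_apply, map_add]
    congr 1
    rw [MonoidHom.comp_apply, precomp_apply, rt_single, one_mul, ← smul_eq_mul, ← map_smul, ← map_smul,
      Finsupp.smul_single, smul_eq_mul, mul_one]
  have κ1 : ∀ v, orb v → κ 1 v = 0 := by
    intro v hv
    have := hκ 1 1 v hv
    simpa [← MonoidAlgebra.one_def] using this
  have κone : ∀ v, κ' 1 v = 0 := by
    intro v
    have := hκ' 1 1 v
    simpa [← MonoidAlgebra.one_def] using this
  have key : ∀ h v, orb v → κ' h v = κ h v := by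
    intro h
    induction h using FreeGroup.induction_on with
    | C1 => intro v hv; rw [κ1 v hv, κone v]
    | of b =>
      intro v hv
      simp only [κ', L, hof]
      rw [LinearMap.sum_apply, Finset.sum_eq_single b]
      · simp
      · intro c _ hc
        simp [hc]
      · simp
    | inv_of b hb =>
      intro v hv
      have h1 := hκ (FreeGroup.of b)⁻¹ (FreeGroup.of b) v hv
      have h2 := hκ' (FreeGroup.of b)⁻¹ (FreeGroup.of b) v
      rw [inv_mul_cancel, κ1 v hv] at h1
      rw [inv_mul_cancel, κone v, hb _ (orb_smul v _ hv)] at h2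
      exact add_right_cancel (h2.symm.trans h1)
    | mul x y hx hy =>
      intro v hv
      rw [hκ _ _ _ hv, hκ', hx v hv, hy _ (orb_smul v x hv)]
  refine ⟨L, fun h hh => ?_⟩
  have h0 : orb v0 := ⟨1, one_mem _, one_smul _ _⟩
  have := key h v0 h0
  simp only [κ', κ] at this
  rw [this]
  have e : (ψ h)⁻¹ • v0 = v0 := ((hC _).1 (inv_mem hh)).2
  rw [e, ht3 v0 rfl, map_one, inv_one, ← MonoidAlgebra.one_def, one_mul, one_mul, inv_one, mul_one, dh_eq]

theorem main_lemma {α β : Type} [Fintype β] {Q : Type} [Group Q]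
    [StrongRankCondition (MonoidAlgebra ℤ Q)]
    (ρ : FreeGroup α →* Q) (ψ : FreeGroup β →* FreeGroup α) (G : Subgroup (FreeGroup α))
    (W : Type) [AddCommGroup W] [Module (MonoidAlgebra ℤ Q) W]
    (Θ : FreeGroup α → ((FreeGroup α ⧸ G →₀ MonoidAlgebra ℤ Q) →ₗ[MonoidAlgebra ℤ Q] W))
    (hΘ : IsCrossed (precomp ρ (FreeGroup α ⧸ G) W) Θ)
    (hJ : ∀ f : β → (FreeGroup α ⧸ G →₀ MonoidAlgebra ℤ Q),
      ∑ b, Θ (ψ (FreeGroup.of b)) (f b) = 0 → f = 0)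
    (S : Finset (FreeGroup α)) (hS : Subgroup.closure (S : Set (FreeGroup α)) = G) :
    ∃ T : Set (FreeGroup α), Subgroup.closure T = ψ.range ⊓ G ∧ Cardinal.mk T ≤ S.card := by
  classical
  let R := MonoidAlgebra ℤ Q
  let V := FreeGroup α ⧸ G
  let v0 : V := ((1 : FreeGroup α) : FreeGroup α ⧸ G)
  let u0 : V →₀ R := Finsupp.single v0 1
  have hv0 : ∀ g : FreeGroup α, g • v0 = v0 ↔ g ∈ G := by
    intro g
    have := MulAction.stabilizer_quotient G
    rw [← MulAction.mem_stabilizer_iff, this]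
  let C : Subgroup (FreeGroup α) := ψ.range ⊓ G
  have hC : ∀ c, c ∈ C ↔ c ∈ ψ.range ∧ c • v0 = v0 := by
    intro c
    rw [hv0]
    exact Subgroup.mem_inf
  let y := IsFreeGroup.basis C
  obtain ⟨Θ', hΘ', hof⟩ := crossed_exists ((precomp ρ V (β → (V →₀ R))).comp ψ)
    (fun b => LinearMap.single R (fun _ => V →₀ R) b)
  have hy : ∀ j, ∃ h, ψ h = (y j : FreeGroup α) := fun j => ((hC _).1 (y j).2).1
  choose h hh using hy
  have ind1 : LinearIndependent R (fun j => Θ' (h j) u0) := by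
    rw [linearIndependent_iff']
    intro s c hc j0 hj0
    obtain ⟨δ, hδ, hδ'⟩ := crossed_exists_basis y (lmulA (ρ.comp C.subtype))
      (fun j => if j = j0 then 1 else 0)
    obtain ⟨L, hL⟩ := dual_functional ρ ψ v0 C hC δ hδ Θ' hΘ' hof
    have hL' : ∀ j, L (Θ' (h j) u0) = if j = j0 then 1 else 0 := by
      intro j
      have h1 : ψ (h j) ∈ C := by rw [hh]; exact (y j).2
      rw [hL (h j) h1, ← hδ' j]
      congr 1
      exact Subtype.ext (hh j)
    have := congrArg L hc
    rw [map_sum, map_zero] at this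
    simp only [map_smul, hL'] at this
    simpa [hj0] using this
  let J : (β → (V →₀ R)) →ₗ[R] W := ∑ b, Θ (ψ (FreeGroup.of b)) ∘ₗ LinearMap.proj b
  have hJa : ∀ f, J f = ∑ b, Θ (ψ (FreeGroup.of b)) (f b) := by
    intro f
    simp [J, LinearMap.sum_apply]
  have hJi : LinearMap.ker J = ⊥ := by
    rw [LinearMap.ker_eq_bot']
    intro f hf
    exact hJ f ((hJa f).symm.trans hf)
  have chain : ∀ g, Θ (ψ g) = J ∘ₗ Θ' g := by
    intro g
    refine IsCrossed.unique (A := (precomp ρ V W).comp ψ) (δ := fun g => Θ (ψ g))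
      (ε := fun g => J ∘ₗ Θ' g) ?_ ?_ ?_ g
    · intro a b
      simp only [map_mul]
      rw [hΘ]
      rfl
    · intro a b
      simp only []
      rw [hΘ', LinearMap.comp_add]
      rfl
    · intro b
      simp only [hof]
      refine LinearMap.ext fun u => ?_
      rw [LinearMap.comp_apply, hJa, Finset.sum_eq_single b]
      · simp
      · intro c _ hc
        simp [hc]
      · simp
  have ind2 : LinearIndependent R (fun j => Θ (y j : FreeGroup α) u0) := by
    have e : (fun j => Θ (y j : FreeGroup α) u0) = J ∘ fun j => Θ' (h j) u0 := by
      funext j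
      rw [← hh, chain]
      rfl
    rw [e]
    exact ind1.map' J hJi
  have hrt : ∀ g ∈ G, rt ρ g u0 = (MonoidAlgebra.single (ρ g) 1 : R) • u0 := by
    intro g hg
    rw [rt_single, (hv0 _).2 (inv_mem hg), Finsupp.smul_single, one_mul, smul_eq_mul, mul_one]
  let w : Finset W := S.image (fun s => Θ s u0)
  have hspan : ∀ g ∈ G, Θ g u0 ∈ Submodule.span R (w : Set W) := by
    intro g hg
    have hg' : g ∈ Subgroup.closure (S : Set (FreeGroup α)) := by rw [hS]; exact hg
    clear hg
    induction hg' using Subgroup.closure_induction with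
    | mem x hx => exact Submodule.subset_span (Finset.mem_coe.2 (Finset.mem_image_of_mem _ hx))
    | one => rw [hΘ.map_one]; exact zero_mem _
    | mul x y hx hy hx' hy' =>
      rw [hS] at hx
      rw [hΘ, LinearMap.add_apply, precomp_apply, hrt x hx, map_smul]
      exact add_mem hx' (Submodule.smul_mem _ _ hy')
    | inv x hx hx' =>
      rw [hS] at hx
      rw [hΘ.map_inv, LinearMap.neg_apply, precomp_apply, hrt _ (inv_mem hx), map_smul]
      exact neg_mem (Submodule.smul_mem _ _ hx')
  have hcard := linearIndependent_le_span' _ ind2 (w : Set W) (by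
    rintro _ ⟨j, rfl⟩
    exact hspan _ (y j).2.2)
  refine ⟨Set.range (fun j => (y j : FreeGroup α)), ?_, ?_⟩
  · have h1 : Set.range (fun j => (y j : FreeGroup α)) = C.subtype '' Set.range y := by
      rw [← Set.range_comp]; rfl
    have h2 : Subgroup.closure (Set.range y) = ⊤ := by
      have h3 : Set.range y = y.repr.symm.toMonoidHom '' Set.range FreeGroup.of := by
        rw [← Set.range_comp]; rfl
      rw [h3, ← MonoidHom.map_closure, FreeGroup.closure_range_of, ← MonoidHom.range_eq_map,
        MonoidHom.range_eq_top]
      exact y.repr.symm.surjective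
    rw [h1, ← MonoidHom.map_closure, h2, ← MonoidHom.range_eq_map, Subgroup.range_subtype]
  · refine Cardinal.mk_range_le.trans (hcard.trans ?_)
    rw [Nat.cast_le]
    have h3 : Fintype.card (w : Set W) = w.card := by simp
    rw [h3]
    exact Finset.card_image_le

end main

/-- the left translation action on finitely supported functions -/
noncomputable def ltA (F X : Type) [Group F] [MulAction F X] : F →* AddMonoid.End (X →₀ ℤ) where
  toFun g := Finsupp.mapDomain.addMonoidHom (g • ·)
  map_one' := by
    refine AddMonoidHom.ext fun x => ?_
    change Finsupp.mapDomain (fun y : X => (1 : F) • y) x = x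
    simp only [one_smul]
    exact Finsupp.mapDomain_id
  map_mul' g h := by
    refine AddMonoidHom.ext fun x => ?_
    change Finsupp.mapDomain (fun y : X => (g * h) • y) x =
      Finsupp.mapDomain (fun y : X => g • y) (Finsupp.mapDomain (fun y : X => h • y) x)
    rw [← Finsupp.mapDomain_comp]
    congr 1
    funext y
    exact mul_smul _ _ _

theorem ltA_single {F X : Type} [Group F] [MulAction F X] (g : F) (x : X) (n : ℤ) :
    ltA F X g (Finsupp.single x n) = Finsupp.single (g • x) n := Finsupp.mapDomain_single

/-- evaluation of a group ring element on a module element -/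
noncomputable def evA {F E : Type} [Group F] [AddCommGroup E] (A : F →* AddMonoid.End E) (e : E) :
    (F →₀ ℤ) →+ E := Finsupp.liftAddHom (fun g => zmultiplesHom E (A g e))

theorem evA_single {F E : Type} [Group F] [AddCommGroup E] (A : F →* AddMonoid.End E) (e : E)
    (g : F) (n : ℤ) : evA A e (Finsupp.single g n) = n • A g e := by
  simp [evA]

theorem evA_crossed {F E : Type} [Group F] [AddCommGroup E] (A : F →* AddMonoid.End E) (e : E)
    (D : F → (F →₀ ℤ)) (hD : IsCrossed (ltA F F) D) : IsCrossed A (fun g => evA A e (D g)) := by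
  intro g h
  simp only [hD g h, map_add]
  congr 1
  have : (evA A e).comp (ltA F F g) = AddMonoidHom.comp (A g) (evA A e) := by
    refine Finsupp.addHom_ext fun x n => ?_
    change evA A e (ltA F F g (Finsupp.single x n)) = A g (evA A e (Finsupp.single x n))
    rw [ltA_single, evA_single, evA_single, map_zsmul, smul_eq_mul, map_mul, addEnd_mul_apply]
  exact DFunLike.congr_fun this (D h)

theorem fox_ne_zero {α : Type} [DecidableEq α] (l : α) (D : FreeGroup α → (FreeGroup α →₀ ℤ))
    (hD : IsCrossed (ltA _ _) D)
    (hof : ∀ i, D (FreeGroup.of i) = if i = l then Finsupp.single 1 1 else 0)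
    (K : Subgroup (FreeGroup α)) (hK : ∀ i, i ≠ l → FreeGroup.of i ∈ K) (w : FreeGroup α)
    (hw : w ∉ K) : D w ≠ 0 := by
  intro h0
  apply hw
  let k : FreeGroup α ⧸ K := ((1 : FreeGroup α) : FreeGroup α ⧸ K)
  have hk : ∀ g : FreeGroup α, g • k = k ↔ g ∈ K := by
    intro g
    rw [← MulAction.mem_stabilizer_iff, MulAction.stabilizer_quotient K]
  let A := ltA (FreeGroup α) (FreeGroup α ⧸ K)
  let e : (FreeGroup α ⧸ K) →₀ ℤ := Finsupp.single (FreeGroup.of l • k) 1 - Finsupp.single k 1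
  have h2 : IsCrossed A (fun g => Finsupp.single (g • k) 1 - Finsupp.single k 1) := by
    intro g h
    simp only [A, map_sub, ltA_single, mul_smul]
    abel
  have := IsCrossed.unique (evA_crossed A e D hD) h2 (by
    intro i
    simp only [hof]
    by_cases hi : i = l
    · subst hi
      simp [evA_single, e]
    · simp only [if_neg hi, map_zero]
      rw [(hk _).2 (hK i hi), sub_self]) w
  simp only [h0, map_zero] at this
  rw [← hk]
  have h3 := sub_eq_zero.1 this.symm
  exact (Finsupp.single_left_inj one_ne_zero).1 h3

theorem op_injective {F V Q : Type} [Group F] [MulAction F V] [Group Q] [UniqueProds Q] (ρ : F →* Q)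
    (c : F →₀ ℤ) (hc : c ≠ 0) (hinj : Set.InjOn ρ c.support) (u : V →₀ MonoidAlgebra ℤ Q)
    (hu : evA (precomp ρ V (V →₀ MonoidAlgebra ℤ Q)) LinearMap.id c u = 0) : u = 0 := by
  classical
  by_contra hu0
  let A : Finset Q := u.support.biUnion (fun v => (u v).coeff.support)
  have hmem : ∀ v a, (u v).coeff a ≠ 0 → a ∈ A := by
    intro v a ha
    refine Finset.mem_biUnion.2 ⟨v, ?_, Finsupp.mem_support_iff.2 ha⟩
    rw [Finsupp.mem_support_iff]
    intro h
    rw [h] at ha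
    exact ha rfl
  have hA : A.Nonempty := by
    obtain ⟨v, hv⟩ := Finsupp.support_nonempty_iff.2 hu0
    have h1 : (u v).coeff ≠ 0 := fun h => Finsupp.mem_support_iff.1 hv (MonoidAlgebra.ext h)
    obtain ⟨a, ha⟩ := Finsupp.support_nonempty_iff.2 h1
    exact ⟨a, Finset.mem_biUnion.2 ⟨v, hv, ha⟩⟩
  have hB : (c.support.image ρ).Nonempty := (Finsupp.support_nonempty_iff.2 hc).image _
  obtain ⟨a0, ha0, b0, hb0, hun⟩ := UniqueProds.uniqueMul_of_nonempty hA hB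
  obtain ⟨v, hv, hav⟩ := Finset.mem_biUnion.1 ha0
  obtain ⟨g0, hg0, rfl⟩ := Finset.mem_image.1 hb0
  have h1 : evA (precomp ρ V (V →₀ MonoidAlgebra ℤ Q)) LinearMap.id c =
      ∑ g ∈ c.support, c g • rt ρ g := by
    rw [evA, Finsupp.liftAddHom_apply, Finsupp.sum]
    rfl
  rw [h1] at hu
  have hz : ∀ (n : ℤ) (T : (V →₀ MonoidAlgebra ℤ Q) →ₗ[MonoidAlgebra ℤ Q] (V →₀ MonoidAlgebra ℤ Q))
      (v : V) (q : Q), ((n • T) u v).coeff q = n * (T u v).coeff q := by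
    intro n T v q
    let m : ((V →₀ MonoidAlgebra ℤ Q) →ₗ[MonoidAlgebra ℤ Q] (V →₀ MonoidAlgebra ℤ Q)) →+ ℤ :=
      AddMonoidHom.mk' (fun T => (T u v).coeff q) (fun S T => by
        simp only [LinearMap.add_apply, Finsupp.add_apply, MonoidAlgebra.coeff_add])
    have := map_zsmul m n T
    rw [smul_eq_mul] at this
    exact this
  have h2 := congrArg (fun x : V →₀ MonoidAlgebra ℤ Q => (x (g0⁻¹ • v)).coeff (a0 * ρ g0)) hu
  simp only [LinearMap.sum_apply, Finsupp.finsetSum_apply, MonoidAlgebra.coeff_sum, hz] at h2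
  rw [Finset.sum_eq_single g0] at h2
  · have h3 : c g0 * (u v).coeff a0 = 0 := by
      simpa [rt_apply] using h2
    exact mul_ne_zero (Finsupp.mem_support_iff.1 hg0) (Finsupp.mem_support_iff.1 hav) h3
  · intro g hg hgg
    by_contra hne
    have h4 : c g * (u (g • g0⁻¹ • v)).coeff (a0 * ρ g0 * (ρ g)⁻¹) ≠ 0 := by
      simpa [rt_apply] using hne
    have h5 := hmem _ _ (right_ne_zero_of_mul h4)
    have h6 := hun h5 (Finset.mem_image_of_mem _ hg) (by group)
    exact hgg (hinj hg hg0 h6.2)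
  · intro h
    exact absurd hg0 h

theorem crossed_postcomp {F V Q : Type} [Group F] [MulAction F V] [Group Q] (ρ : F →* Q)
    {W W' : Type} [AddCommGroup W] [Module (MonoidAlgebra ℤ Q) W]
    [AddCommGroup W'] [Module (MonoidAlgebra ℤ Q) W'] (p : W →ₗ[MonoidAlgebra ℤ Q] W')
    (Θ : F → ((V →₀ MonoidAlgebra ℤ Q) →ₗ[MonoidAlgebra ℤ Q] W))
    (hΘ : IsCrossed (precomp ρ V W) Θ) : IsCrossed (precomp ρ V W') (fun g => p ∘ₗ Θ g) := by
  intro a b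
  refine LinearMap.ext fun u => ?_
  simp only []
  rw [hΘ a b]
  rw [LinearMap.comp_add]
  rfl

theorem fox_coord_aux {α E : Type} [DecidableEq α] [AddCommGroup E]
    (A : FreeGroup α →* AddMonoid.End E) (e : E)
    (l : α) (D : FreeGroup α → (FreeGroup α →₀ ℤ))
    (hD : IsCrossed (ltA _ _) D)
    (hDof : ∀ i, D (FreeGroup.of i) = if i = l then Finsupp.single 1 1 else 0)
    (T : FreeGroup α → E) (hT : IsCrossed A T)
    (hof : ∀ i, T (FreeGroup.of i) = if i = l then e else 0) (g : FreeGroup α) :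
    T g = evA A e (D g) := by
  refine IsCrossed.unique hT (evA_crossed A e D hD) ?_ g
  intro i
  simp only [hof, hDof]
  by_cases hi : i = l
  · rw [if_pos hi, if_pos hi, evA_single, one_smul, map_one, AddMonoid.End.one_apply]
  · rw [if_neg hi, if_neg hi, map_zero]

theorem fox_coord {α Q : Type} [DecidableEq α] [Group Q] (ρ : FreeGroup α →* Q) (V : Type)
    [MulAction (FreeGroup α) V] (l : α) (D : FreeGroup α → (FreeGroup α →₀ ℤ))
    (hD : IsCrossed (ltA _ _) D)
    (hDof : ∀ i, D (FreeGroup.of i) = if i = l then Finsupp.single 1 1 else 0)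
    (Θ : FreeGroup α → ((V →₀ MonoidAlgebra ℤ Q) →ₗ[MonoidAlgebra ℤ Q] (α → (V →₀ MonoidAlgebra ℤ Q))))
    (hΘ : IsCrossed (precomp ρ V (α → (V →₀ MonoidAlgebra ℤ Q))) Θ)
    (hof : ∀ i, Θ (FreeGroup.of i) =
      LinearMap.single (MonoidAlgebra ℤ Q) (fun _ => V →₀ MonoidAlgebra ℤ Q) i)
    (g : FreeGroup α) :
    LinearMap.proj l ∘ₗ Θ g = evA (precomp ρ V (V →₀ MonoidAlgebra ℤ Q)) LinearMap.id (D g) := by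
  have h1 := crossed_postcomp ρ (LinearMap.proj (R := MonoidAlgebra ℤ Q)
    (φ := fun _ : α => V →₀ MonoidAlgebra ℤ Q) l) Θ hΘ
  refine fox_coord_aux _ LinearMap.id l D hD hDof _ h1 ?_ g
  intro i
  by_cases hi : i = l
  · rw [if_pos hi, hof, hi]
    exact LinearMap.proj_comp_single_same _ _ _
  · rw [if_neg hi, hof]
    exact LinearMap.proj_comp_single_ne _ _ _ _ (Ne.symm hi)

theorem core {α : Type} [Fintype α] [DecidableEq α] (l : α) (φ : FreeGroup α →* FreeGroup α)
    (hφ : ∀ i, i ≠ l → φ (FreeGroup.of i) = FreeGroup.of i) (G : Subgroup (FreeGroup α))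
    (S : Finset (FreeGroup α)) (hS : Subgroup.closure (S : Set (FreeGroup α)) = G) :
    ∃ T : Set (FreeGroup α), Subgroup.closure T = φ.range ⊓ G ∧ Cardinal.mk T ≤ S.card := by
  classical
  let ψ : FreeGroup {i // i ≠ l} →* FreeGroup α := FreeGroup.map Subtype.val
  have hψ : ∀ b, ψ (FreeGroup.of b) = FreeGroup.of b.1 := fun b => FreeGroup.map.of
  by_cases hw : φ (FreeGroup.of l) ∈ ψ.range
  · have hr : φ.range = ψ.range := by
      apply le_antisymm
      · rw [MonoidHom.range_eq_map, ← FreeGroup.closure_range_of, MonoidHom.map_closure,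
          Subgroup.closure_le]
        rintro _ ⟨_, ⟨i, rfl⟩, rfl⟩
        by_cases hi : i = l
        · subst hi; exact hw
        · rw [hφ i hi]
          exact ⟨FreeGroup.of ⟨i, hi⟩, hψ _⟩
      · rintro _ ⟨h, rfl⟩
        have : φ.comp ψ = ψ := by
          ext b
          rw [MonoidHom.comp_apply, hψ, hφ _ b.2]
        exact ⟨ψ h, DFunLike.congr_fun this h⟩
    rw [hr]
    obtain ⟨Q, _, ρ, hQ, -⟩ := freeGroup_separate (∅ : Finset (FreeGroup α))
    have := hQ.src
    let U := (FreeGroup α ⧸ G) →₀ MonoidAlgebra ℤ Q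
    obtain ⟨Θ, hΘ, hof⟩ := crossed_exists (precomp ρ (FreeGroup α ⧸ G) (α → U))
      (fun i => LinearMap.single (MonoidAlgebra ℤ Q) (fun _ => U) i)
    refine main_lemma ρ ψ G (α → U) Θ hΘ ?_ S hS
    intro f hf
    funext i
    have h1 := congrFun hf i.1
    rw [Finset.sum_apply, Finset.sum_eq_single i] at h1
    · rw [hψ, hof] at h1
      simpa using h1
    · intro j _ hj
      rw [hψ, hof, LinearMap.single_apply, Pi.single_eq_of_ne]
      exact fun h => hj (Subtype.ext h.symm)
    · simp
  · obtain ⟨D, hD, hDof⟩ := crossed_exists (ltA (FreeGroup α) (FreeGroup α))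
      (fun i => if i = l then Finsupp.single 1 1 else 0)
    have hDw := fox_ne_zero l D hD hDof ψ.range (fun i hi => ⟨FreeGroup.of ⟨i, hi⟩, hψ _⟩) _ hw
    obtain ⟨Q, _, ρ, hQ, hinj⟩ := freeGroup_separate (D (φ (FreeGroup.of l))).support
    have := hQ.src
    have := hQ.up
    let U := (FreeGroup α ⧸ G) →₀ MonoidAlgebra ℤ Q
    obtain ⟨Θ, hΘ, hof⟩ := crossed_exists (precomp ρ (FreeGroup α ⧸ G) (α → U))
      (fun i => LinearMap.single (MonoidAlgebra ℤ Q) (fun _ => U) i)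
    have hl := fox_coord ρ (FreeGroup α ⧸ G) l D hD hDof Θ hΘ hof
    refine main_lemma ρ φ G (α → U) Θ hΘ ?_ S hS
    intro f hf
    have hfl : f l = 0 := by
      have h1 := congrFun hf l
      rw [Finset.sum_apply, Finset.sum_eq_single l] at h1
      · have h2 := LinearMap.congr_fun (hl (φ (FreeGroup.of l))) (f l)
        exact op_injective ρ _ hDw hinj (f l) (h2.symm.trans h1)
      · intro j _ hj
        rw [hφ j hj, hof, LinearMap.single_apply, Pi.single_eq_of_ne hj.symm]
      · simp
    funext i
    by_cases hi : i = l
    · rw [hi, hfl]; rfl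
    · have h1 := congrFun hf i
      rw [Finset.sum_apply, Finset.sum_eq_single i] at h1
      · rw [hφ i hi, hof] at h1
        simpa using h1
      · intro j _ hj
        by_cases hjl : j = l
        · rw [hjl, hfl, map_zero]; rfl
        · rw [hφ j hjl, hof, LinearMap.single_apply, Pi.single_eq_of_ne hj.symm]
      · simp

/-- The image of a 1-generator endomorphism of a free group (an endomorphism fixing
all basis elements except possibly the last one) is inert. -/
theorem oneGenEndo_image_inert (n : ℕ) (φ : FreeGroup (Fin n) →* FreeGroup (Fin n))
    (hφ : ∀ i : Fin n, (i : ℕ) < n - 1 → φ (FreeGroup.of i) = FreeGroup.of i) :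
    IsInert φ.range := by
  have hcore : ∀ (K : Subgroup (FreeGroup (Fin n))) (S : Finset (FreeGroup (Fin n))),
      Subgroup.closure (S : Set (FreeGroup (Fin n))) = K → rk (φ.range ⊓ K) ≤ S.card := by
    intro K S hS
    obtain ⟨T, hT, hT'⟩ : ∃ T : Set (FreeGroup (Fin n)), Subgroup.closure T = φ.range ⊓ K ∧
        Cardinal.mk T ≤ S.card := by
      cases n with
      | zero =>
        refine ⟨∅, ?_, by simp⟩
        exact Subsingleton.elim _ _
      | succ m =>
        refine core (Fin.last m) φ (fun i hi => hφ i ?_) K S hS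
        have := Fin.val_lt_last hi
        simpa using this
    exact (ciInf_le' (fun S : {S : Set (FreeGroup (Fin n)) // Subgroup.closure S = φ.range ⊓ K} =>
      Cardinal.mk S.1) ⟨T, hT⟩).trans hT'
  intro K hK
  have : Nonempty {S : Set (FreeGroup (Fin n)) // Subgroup.closure S = K} :=
    ⟨⟨K, Subgroup.closure_eq K⟩⟩
  refine le_ciInf fun S => ?_
  obtain ⟨S, hS⟩ := S
  by_cases hfin : S.Finite
  · have h1 := hcore K hfin.toFinset (by simpa using hS)
    refine h1.trans (le_of_eq ?_)
    rw [← Cardinal.mk_coe_finset]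
    simp
  · obtain ⟨S0, hS0⟩ := hK
    refine (hcore K S0 hS0).trans ((Cardinal.natCast_lt_aleph0).le.trans ?_)
    exact Cardinal.infinite_iff.1 (Set.infinite_coe_iff.2 hfin)
end

section
/- Every echelon subgroup of a free group of finite rank n is inert: if H is an echelon subgroup of F_n, then rk(H ∩ G) ≤ rk(G) for every finitely generated subgroup G of F_n. -/
/-! ### Potentials and separating edges -/
namespace Ech

/-- vertices of the Cayley tree -/
abbrev Fr (n : ℕ) := FreeGroup (Fin n)

/-- edges of the Cayley tree -/
@[ext] structure Edge (n : ℕ) where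
  src : Fr n
  lab : Fin n

variable {n : ℕ}

def Edge.tgt (e : Edge n) : Fr n := e.src * FreeGroup.of e.lab

instance : MulAction (Fr n) (Edge n) where
  smul g e := ⟨g * e.src, e.lab⟩
  one_smul e := by
    change (⟨1 * e.src, e.lab⟩ : Edge n) = e
    simp
  mul_smul g h e := by
    change (⟨g * h * e.src, e.lab⟩ : Edge n) = ⟨g * (h * e.src), e.lab⟩
    rw [mul_assoc]

@[simp] lemma smul_src (g : Fr n) (e : Edge n) : (g • e).src = g * e.src := rfl
@[simp] lemma smul_lab (g : Fr n) (e : Edge n) : (g • e).lab = e.lab := rfl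
@[simp] lemma smul_tgt (g : Fr n) (e : Edge n) : (g • e).tgt = g * e.tgt := by
  simp [Edge.tgt, mul_assoc]

/-- `e` joins `u` and `v` -/
def Jn (e : Edge n) (u v : Fr n) : Prop :=
  (e.src = u ∧ e.tgt = v) ∨ (e.src = v ∧ e.tgt = u)

lemma Jn.symm {e : Edge n} {u v : Fr n} (h : Jn e u v) : Jn e v u := Or.symm h

lemma Jn.smul {e : Edge n} {u v : Fr n} (h : Jn e u v) (g : Fr n) :
    Jn (g • e) (g * u) (g * v) := by
  rcases h with ⟨rfl, rfl⟩ | ⟨rfl, rfl⟩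
  · left; simp
  · right; simp

lemma jn_self (e : Edge n) : Jn e e.src e.tgt := Or.inl ⟨rfl, rfl⟩

lemma walk_ind {P : Fr n → Prop} (u : Fr n) (hu : P u)
    (h : ∀ e a b, Jn e a b → P a → P b) (v : Fr n) : P v := by
  have key : ∀ w : Fr n, ∀ u, P u → P (u * w) := by
    intro w
    induction w using FreeGroup.induction_on with
    | C1 => intro u hu; simpa using hu
    | of i =>
      intro u hu
      exact h ⟨u, i⟩ _ _ (Or.inl ⟨rfl, rfl⟩) hu
    | inv_of i _ =>
      intro u hu
      refine h ⟨u * (FreeGroup.of i)⁻¹, i⟩ _ _ (Or.inr ⟨rfl, ?_⟩) hu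
      simp [Edge.tgt]
    | mul x y hx hy =>
      intro u hu
      rw [← mul_assoc]
      exact hy _ (hx _ hu)
  have := key (u⁻¹ * v) u hu
  simpa using this

section potential
variable {A : Type*} [AddCommGroup A]

def stepEquiv (c : Edge n → A) (i : Fin n) : Equiv.Perm (A × Fr n) where
  toFun x := (x.1 + c ⟨x.2, i⟩, x.2 * FreeGroup.of i)
  invFun x := (x.1 - c ⟨x.2 * (FreeGroup.of i)⁻¹, i⟩, x.2 * (FreeGroup.of i)⁻¹)
  left_inv x := by simp
  right_inv x := by simp

lemma exists_potential (c : Edge n → A) :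
    ∃ p : Fr n → A, ∀ e, p e.tgt = p e.src + c e := by
  let Φ : Fr n →* (Equiv.Perm (A × Fr n))ᵐᵒᵖ :=
    FreeGroup.lift (fun i => MulOpposite.op (stepEquiv c i))
  have hst : ∀ g i, (Φ (g * FreeGroup.of i)).unop (0, 1)
      = stepEquiv c i ((Φ g).unop (0, 1)) := by
    intro g i
    simp [Φ]
  have h2 : ∀ g, ((Φ g).unop (0, 1)).2 = g := by
    intro g
    refine walk_ind (P := fun g => ((Φ g).unop (0, 1)).2 = g) 1 (by simp) ?_ g
    have h1 : ∀ e : Edge n, ((Φ e.tgt).unop (0, 1)).2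
        = ((Φ e.src).unop (0, 1)).2 * FreeGroup.of e.lab := by
      intro e
      rw [Edge.tgt, hst]; rfl
    rintro e a b (⟨rfl, rfl⟩ | ⟨rfl, rfl⟩) h
    · rw [h1, h]; rfl
    · rw [h1, Edge.tgt] at h
      exact mul_right_cancel h
  refine ⟨fun g => ((Φ g).unop (0, 1)).1, fun e => ?_⟩
  dsimp only
  rw [Edge.tgt, hst]
  simp only [stepEquiv, Equiv.coe_fn_mk, h2]

lemma potential_unique (p q : Fr n → A)
    (h : ∀ e : Edge n, p e.tgt - p e.src = q e.tgt - q e.src) (u v : Fr n) :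
    p v - p u = q v - q u := by
  refine walk_ind (P := fun v => p v - p u = q v - q u) u (by simp) ?_ v
  rintro e a b (⟨rfl, rfl⟩ | ⟨rfl, rfl⟩) h'
  · have h1 : p e.tgt - p u = (p e.tgt - p e.src) + (p e.src - p u) := by abel
    have h2 : q e.tgt - q u = (q e.tgt - q e.src) + (q e.src - q u) := by abel
    rw [h1, h2, h e, h']
  · have h1 : p e.src - p u = (p e.tgt - p u) - (p e.tgt - p e.src) := by abel
    have h2 : q e.src - q u = (q e.tgt - q u) - (q e.tgt - q e.src) := by abel
    rw [h1, h2, h e, h']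
end potential

open Classical in
noncomputable def sd (e : Edge n) : Fr n → ZMod 2 :=
  (exists_potential (fun f => if f = e then (1 : ZMod 2) else 0)).choose

open Classical in
lemma sd_spec (e f : Edge n) : sd e f.tgt = sd e f.src + if f = e then 1 else 0 :=
  (exists_potential (fun f => if f = e then (1 : ZMod 2) else 0)).choose_spec f

/-- the set of edges separating `u` from `v`, i.e. the geodesic from `u` to `v` -/
def Sep (u v : Fr n) : Set (Edge n) := {e | sd e u ≠ sd e v}

lemma mem_sep {u v : Fr n} {e : Edge n} : e ∈ Sep u v ↔ sd e u ≠ sd e v := Iff.rfl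

@[simp] lemma sep_self (u : Fr n) : Sep u u = ∅ := by ext; simp [mem_sep]

lemma sep_comm (u v : Fr n) : Sep u v = Sep v u := by ext; simp [mem_sep, ne_comm]

lemma zmod2_xor : ∀ a b c : ZMod 2, (a ≠ c) ↔ ¬ ((a ≠ b) ↔ (b ≠ c)) := by decide

lemma sep_xor (u v w : Fr n) (e : Edge n) :
    e ∈ Sep u w ↔ ¬ (e ∈ Sep u v ↔ e ∈ Sep v w) := zmod2_xor _ _ _

lemma sep_tri {u v w : Fr n} {e : Edge n} (h : e ∈ Sep u w) : e ∈ Sep u v ∨ e ∈ Sep v w := by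
  rw [sep_xor u v w] at h; tauto

lemma sep_jn {e : Edge n} {u v : Fr n} (h : Jn e u v) : Sep u v = {e} := by
  have : Sep e.src e.tgt = {e} := by
    ext f
    rw [mem_sep, sd_spec]
    by_cases hf : e = f
    · simp [hf]
    · simp [hf, Ne.symm hf]
  rcases h with ⟨rfl, rfl⟩ | ⟨rfl, rfl⟩
  · exact this
  · rw [sep_comm, this]

lemma Jn.ne {e : Edge n} {u v : Fr n} (h : Jn e u v) : u ≠ v := by
  rintro rfl
  have := sep_jn h
  rw [sep_self] at this
  exact (Set.singleton_ne_empty e) this.symm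

lemma Jn.unique {e f : Edge n} {u v : Fr n} (h : Jn e u v) (h' : Jn f u v) : e = f := by
  have := sep_jn h
  rw [sep_jn h'] at this
  exact (Set.singleton_injective this).symm

lemma mem_sep_jn {e f : Edge n} {u v w : Fr n} (h : Jn f v w) :
    e ∈ Sep u w ↔ ¬ (e ∈ Sep u v ↔ e = f) := by
  rw [sep_xor u v w, sep_jn h, Set.mem_singleton_iff]

lemma sep_finite (u v : Fr n) : (Sep u v).Finite := by
  refine walk_ind (P := fun v => (Sep u v).Finite) u (by simp) ?_ v
  intro e a b h ha
  refine (ha.union (Set.finite_singleton e)).subset ?_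
  intro f hf
  rcases sep_tri (v := a) hf with h1 | h1
  · exact Or.inl h1
  · rw [sep_jn h] at h1; exact Or.inr h1

lemma mem_sep_smul (g u v : Fr n) (e : Edge n) :
    g • e ∈ Sep (g * u) (g * v) ↔ e ∈ Sep u v := by
  have := potential_unique (fun u => sd (g • e) (g * u)) (sd e) (by
    intro f
    rw [← smul_tgt, ← smul_src, sd_spec, sd_spec]
    by_cases hfe : f = e
    · simp [hfe]
    · have : g • f ≠ g • e := fun h => hfe ((smul_left_cancel_iff g).1 h)
      simp [hfe, this]) u v
  rw [mem_sep, mem_sep, ← sub_ne_zero, ← sub_ne_zero (a := sd e u), ← neg_ne_zero,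
    ← neg_ne_zero (a := sd e u - _)]
  rw [neg_sub, neg_sub, this]

lemma mem_sep_smul' (g u v : Fr n) (e : Edge n) :
    e ∈ Sep (g * u) (g * v) ↔ g⁻¹ • e ∈ Sep u v := by
  rw [← mem_sep_smul g u v (g⁻¹ • e), smul_inv_smul]

/-- local structure of the tree -/
lemma exists_local (u t : Fr n) (h : t ≠ u) :
    ∃ e, ∀ e', ((∃ v, Jn e' u v) ∧ e' ∈ Sep u t) ↔ e' = e := by
  revert h
  refine walk_ind (P := fun t => t ≠ u → ∃ e, ∀ e', ((∃ v, Jn e' u v) ∧ e' ∈ Sep u t) ↔ e' = e)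
    u (by simp) ?_ t
  intro f a b hf ha hb
  by_cases hau : a = u
  · subst hau
    refine ⟨f, fun e' => ?_⟩
    rw [sep_jn hf]
    constructor
    · exact fun h => h.2
    · rintro rfl; exact ⟨⟨b, hf⟩, rfl⟩
  · obtain ⟨e, he⟩ := ha hau
    refine ⟨e, fun e' => ?_⟩
    rw [← he e']
    refine and_congr_right ?_
    rintro ⟨v, hv⟩
    have hne : e' ≠ f := by
      rintro rfl
      rcases hv with ⟨h1, h2⟩ | ⟨h1, h2⟩ <;> rcases hf with ⟨h3, h4⟩ | ⟨h3, h4⟩ <;>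
        simp_all
    rw [mem_sep_jn hf]
    tauto

lemma local_unique {u t v v' : Fr n} {e e' : Edge n} (h : Jn e u v) (he : e ∈ Sep u t)
    (h' : Jn e' u v') (he' : e' ∈ Sep u t) : e = e' := by
  have hne : t ≠ u := by rintro rfl; simp at he
  obtain ⟨e0, h0⟩ := exists_local u t hne
  rw [(h0 e).1 ⟨⟨v, h⟩, he⟩, (h0 e').1 ⟨⟨v', h'⟩, he'⟩]

lemma exists_step {u t : Fr n} (h : t ≠ u) :
    ∃ e v, Jn e u v ∧ e ∈ Sep u t ∧ Sep v t = Sep u t \ {e} := by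
  obtain ⟨e, he⟩ := exists_local u t h
  obtain ⟨⟨v, hv⟩, he'⟩ := (he e).2 rfl
  refine ⟨e, v, hv, he', ?_⟩
  ext f
  rw [sep_comm, mem_sep_jn hv, sep_comm t u]
  by_cases hf : f = e
  · subst hf; simp [he']
  · simp [hf]

lemma step_ncard {u v t : Fr n} {e : Edge n} (he : e ∈ Sep u t) (h : Sep v t = Sep u t \ {e}) :
    (Sep v t).ncard < (Sep u t).ncard := by
  rw [h]
  exact Set.ncard_sdiff_singleton_lt_of_mem he (sep_finite _ _)

/-- nestedness -/
lemma nested {f g : Edge n} (h : f ≠ g) (w : Fr n) :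
    sd g w = sd g f.src ∨ sd f w = sd f g.src := by
  refine walk_ind (P := fun w => sd g w = sd g f.src ∨ sd f w = sd f g.src) f.src (Or.inl rfl) ?_ w
  have hf : sd g f.tgt = sd g f.src := by rw [sd_spec]; simp [h]
  have hg : sd f g.tgt = sd f g.src := by rw [sd_spec]; simp [h.symm]
  intro e a b he ha
  by_cases h1 : e = f
  · subst h1
    left
    rcases he with ⟨rfl, rfl⟩ | ⟨rfl, rfl⟩
    · exact hf
    · rfl
  by_cases h2 : e = g
  · subst h2
    right
    rcases he with ⟨rfl, rfl⟩ | ⟨rfl, rfl⟩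
    · exact hg
    · rfl
  have e1 : sd f a = sd f b := by
    by_contra hc
    have : f ∈ Sep a b := hc
    rw [sep_jn he] at this
    exact h1 this.symm
  have e2 : sd g a = sd g b := by
    by_contra hc
    have : g ∈ Sep a b := hc
    rw [sep_jn he] at this
    exact h2 this.symm
  rw [← e1, ← e2]; exact ha

/-- an endpoint of an edge of the geodesic lies on the geodesic -/
lemma sep_sub {u t : Fr n} {e : Edge n} (he : e ∈ Sep u t) :
    ∃ a b, Jn e a b ∧ Sep u a ⊆ Sep u t \ {e} ∧ Sep b t ⊆ Sep u t \ {e} := by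
  have key : ∀ a b, Jn e a b → e ∉ Sep u a → Sep u a ⊆ Sep u t \ {e} ∧ Sep b t ⊆ Sep u t \ {e} := by
    intro a b hab hu
    have hb : e ∉ Sep b t := by
      have h1 : e ∈ Sep a b := by rw [sep_jn hab]; rfl
      have h2 := sep_xor u a t e
      have h3 := sep_xor a b t e
      tauto
    have main : ∀ f, f ≠ e → f ∈ Sep u a → f ∉ Sep u t → False := by
      intro f hf h1 h2
      have hn1 := nested (Ne.symm hf) u
      have hn2 := nested (Ne.symm hf) t
      have hsrc : sd f a = sd f e.src := by
        rcases hab with ⟨rfl, rfl⟩ | ⟨rfl, rfl⟩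
        · rfl
        · rw [sd_spec]; simp [Ne.symm hf]
      rw [mem_sep] at h1 h2 he
      rw [not_not] at h2
      rw [hsrc] at h1
      rcases hn1 with h | h
      · exact h1 h
      rcases hn2 with h' | h'
      · exact h1 (h2.trans h')
      · exact he (h.trans h'.symm)
    constructor
    · intro f hf
      have hfe : f ≠ e := by rintro rfl; exact hu hf
      refine ⟨?_, hfe⟩
      by_contra hc
      exact main f hfe hf hc
    · intro f hf
      have hfe : f ≠ e := by rintro rfl; exact hb hf
      refine ⟨?_, hfe⟩
      by_contra hc
      refine main f hfe ?_ hc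
      have h0 : f ∉ Sep a b := by rw [sep_jn hab]; exact hfe
      have h2 := sep_xor u a t f
      have h3 := sep_xor a b t f
      tauto
  by_cases h : e ∈ Sep u e.src
  · have h' : e ∉ Sep u e.tgt := by
      rw [mem_sep_jn (jn_self e)]; simp [h]
    exact ⟨e.tgt, e.src, (jn_self e).symm, key _ _ (jn_self e).symm h'⟩
  · exact ⟨e.src, e.tgt, jn_self e, key _ _ (jn_self e) h⟩

end Ech

namespace Ech
/-! ### A left-invariant order on the free group -/

section order

lemma exists_orderIso_extending (p : Order.PartialIso ℚ ℚ) :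
    ∃ f : ℚ ≃o ℚ, ∀ x ∈ p.val, f x.1 = x.2 := by
  classical
  let to_cofinal : ℚ ⊕ ℚ → Order.Cofinal (Order.PartialIso ℚ ℚ) := fun p ↦
    Sum.recOn p (Order.PartialIso.definedAtLeft ℚ) (Order.PartialIso.definedAtRight ℚ)
  let our_ideal : Order.Ideal (Order.PartialIso ℚ ℚ) := Order.idealOfCofinals p to_cofinal
  let F a := Order.PartialIso.funOfIdeal a our_ideal
    (Order.cofinal_meets_idealOfCofinals _ to_cofinal (Sum.inl a))
  let G b := Order.PartialIso.invOfIdeal b our_ideal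
    (Order.cofinal_meets_idealOfCofinals _ to_cofinal (Sum.inr b))
  refine ⟨OrderIso.ofCmpEqCmp (fun a ↦ (F a).val) (fun b ↦ (G b).val) fun a b ↦ ?_, ?_⟩
  · rcases (F a).prop with ⟨f, hf, ha⟩
    rcases (G b).prop with ⟨g, hg, hb⟩
    rcases our_ideal.directed _ hf _ hg with ⟨m, _, fm, gm⟩
    exact m.prop (a, _) (fm ha) (_, b) (gm hb)
  · intro x hx
    change (F x.1).val = x.2
    rcases (F x.1).prop with ⟨f, hf, ha⟩
    rcases our_ideal.directed _ hf _ (Order.mem_idealOfCofinals p to_cofinal) with ⟨m, _, fm, gm⟩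
    have := m.prop _ (fm ha) _ (gm hx)
    rw [cmp_self_eq_eq] at this
    exact (cmp_eq_eq_iff _ _).1 this.symm

/-- a nontrivial reduced word acts nontrivially in some action on `ℚ` -/
lemma exists_action {n : ℕ} (w : FreeGroup (Fin n)) (hw : w ≠ 1) :
    ∃ (φ : FreeGroup (Fin n) →* (ℚ ≃o ℚ)) (q : ℚ), φ w q ≠ q := by
  classical
  set L := w.toWord with hL
  have hred : FreeGroup.IsReduced L := FreeGroup.isReduced_toWord
  have hstep : ∀ j (h : j + 1 < L.length), L[j].1 = L[j+1].1 → L[j].2 = L[j+1].2 := by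
    intro j h
    exact (List.isChain_iff_getElem.1 hred) j h
  -- pair associated with position `j`
  let pr : ℕ × Bool → ℚ × ℚ := fun x =>
    if x.2 then ((x.1 : ℚ) + 1, (x.1 : ℚ)) else ((x.1 : ℚ), (x.1 : ℚ) + 1)
  let S : Fin n → Finset (ℚ × ℚ) := fun a =>
    ((Finset.univ : Finset (Fin L.length)).filter (fun j : Fin L.length => L[j].1 = a)).image
      (fun j : Fin L.length => pr ((j : ℕ), L[j].2))
  have hS : ∀ a, ∀ p ∈ S a, ∀ q ∈ S a, cmp p.1 q.1 = cmp p.2 q.2 := by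
    have lt_case : ∀ j k (hj : j < L.length) (hk : k < L.length), j < k → L[j].1 = L[k].1 →
        (pr (j, L[j].2)).1 < (pr (k, L[k].2)).1 ∧ (pr (j, L[j].2)).2 < (pr (k, L[k].2)).2 := by
      intro j k hj hk hjk hl
      have h1 : (j : ℚ) + 1 ≤ k := by exact_mod_cast hjk
      by_cases hadj : k = j + 1
      · subst hadj
        have := hstep j hk hl
        rw [this]
        push_cast
        cases L[j+1].2 <;> simp [pr]
      · have h2 : (j : ℚ) + 2 ≤ k := by
          have : j + 2 ≤ k := by omega
          exact_mod_cast this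
        cases L[j].2 <;> cases L[k].2 <;> simp [pr] <;>
          first | exact hjk | (constructor <;> linarith)
    intro a p hp q hq
    simp only [S, Finset.mem_image, Finset.mem_filter, Finset.mem_univ, true_and] at hp hq
    obtain ⟨j, hj, rfl⟩ := hp
    obtain ⟨k, hk, rfl⟩ := hq
    rcases lt_trichotomy (j : ℕ) k with h | h | h
    · obtain ⟨h1, h2⟩ := lt_case j k j.2 k.2 h (hj.trans hk.symm)
      exact ((cmp_eq_lt_iff _ _).2 h1).trans ((cmp_eq_lt_iff _ _).2 h2).symm
    · have : j = k := Fin.ext h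
      subst this
      simp
    · obtain ⟨h1, h2⟩ := lt_case k j k.2 j.2 h (hk.trans hj.symm)
      exact ((cmp_eq_gt_iff _ _).2 h1).trans ((cmp_eq_gt_iff _ _).2 h2).symm
  choose f hf using fun a => exists_orderIso_extending ⟨S a, hS a⟩
  let φ : FreeGroup (Fin n) →* (ℚ ≃o ℚ) := FreeGroup.lift f
  refine ⟨φ, L.length, ?_⟩
  have hletter : ∀ j (h : j < L.length), φ (FreeGroup.mk [L[j]]) ((j : ℚ) + 1) = j := by
    intro j h
    have hm : pr (j, L[j].2) ∈ S L[j].1 :=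
      Finset.mem_image.2 ⟨⟨j, h⟩, by simp, rfl⟩
    have := hf _ _ hm
    rcases hlj : L[j] with ⟨a, b⟩
    rw [hlj] at this
    cases b
    · simp only [pr] at this
      have e1 : FreeGroup.mk [(a, false)] = (FreeGroup.of a)⁻¹ := rfl
      rw [e1, map_inv]
      have e2 : φ (FreeGroup.of a) = f a := by simp [φ]
      rw [e2]
      have : f a (j : ℚ) = j + 1 := by simpa using this
      rw [← this]
      exact (f a).symm_apply_apply _
    · simp only [pr] at this
      have e1 : FreeGroup.mk [(a, true)] = (FreeGroup.of a) := rfl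
      have e2 : φ (FreeGroup.of a) = f a := by simp [φ]
      rw [e1, e2]
      simpa using this
  have hdrop : ∀ k, k ≤ L.length → φ (FreeGroup.mk (L.drop (L.length - k))) L.length
      = ((L.length - k : ℕ) : ℚ) := by
    intro k
    induction k with
    | zero => intro _; simp [← FreeGroup.one_eq_mk]
    | succ k ih =>
      intro hk
      have hlt : L.length - (k + 1) < L.length := by omega
      have e : L.length - (k + 1) + 1 = L.length - k := by omega
      rw [List.drop_eq_getElem_cons hlt, e]
      have : FreeGroup.mk (L[L.length - (k + 1)] :: L.drop (L.length - k))
        = FreeGroup.mk [L[L.length - (k + 1)]] * FreeGroup.mk (L.drop (L.length - k)) := by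
        rw [FreeGroup.mul_mk]; rfl
      rw [this, map_mul]
      rw [RelIso.mul_apply]
      rw [ih (by omega), ← e]
      push_cast
      exact hletter _ hlt
  have := hdrop L.length le_rfl
  simp only [Nat.sub_self, List.drop_zero] at this
  rw [hL, FreeGroup.mk_toWord, ← hL] at this
  rw [this]
  have : L ≠ [] := by
    rw [hL]; simpa using hw
  have : L.length ≠ 0 := by simpa using this
  exact_mod_cast this.symm

lemma exists_left_order (n : ℕ) : ∃ o : LinearOrder (FreeGroup (Fin n)),
    ∀ f g h : FreeGroup (Fin n), o.lt g h → o.lt (f * g) (f * h) := by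
  classical
  let ι := (FreeGroup (Fin n) →* (ℚ ≃o ℚ)) × ℚ
  let _ : LinearOrder ι := linearOrderOfSTO WellOrderingRel
  have : WellFoundedLT ι := ⟨WellOrderingRel.isWellOrder.wf⟩
  let Ψ : FreeGroup (Fin n) → Lex (ι → ℚ) := fun g => toLex (fun x => x.1 g x.2)
  have hinj : Function.Injective Ψ := by
    intro g h hgh
    by_contra hne
    obtain ⟨φ, q, hq⟩ := exists_action (h⁻¹ * g) (by
      intro h'; exact hne (by rw [inv_mul_eq_one] at h'; exact h'.symm))
    apply hq
    have h1 : φ g q = φ h q := congrFun (congrArg ofLex hgh) (φ, q)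
    rw [map_mul, map_inv]
    change (φ h).symm (φ g q) = q
    rw [h1]; simp
  refine ⟨LinearOrder.lift' Ψ hinj, ?_⟩
  intro f g h hgh
  change Ψ g < Ψ h at hgh
  change Ψ (f * g) < Ψ (f * h)
  obtain ⟨i, h1, h2⟩ := hgh
  have hmul : ∀ (i : ι) g, Ψ (f * g) i = i.1 f (Ψ g i) := by
    intro i g
    change i.1 (f * g) i.2 = _
    rw [map_mul]; rfl
  refine ⟨i, fun j hj => ?_, ?_⟩
  · exact (hmul j g).trans ((congrArg (j.1 f) (h1 j hj)).trans (hmul j h).symm)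
  · have h3 : i.1 f (Ψ g i) < i.1 f (Ψ h i) := (i.1 f).lt_iff_lt.2 h2
    exact lt_of_eq_of_lt (hmul i g) (lt_of_lt_of_eq h3 (hmul i h).symm)
end order
end Ech

namespace Ech
/-! ### The order on edges, clusters and thresholds -/
variable {n : ℕ}

noncomputable instance : LinearOrder (Edge n) :=
  letI := (exists_left_order n).choose
  LinearOrder.lift' (fun e : Edge n => (toLex (e.lab, e.src) : Lex (Fin n × Fr n)))
    (fun e f h => by
      have h' := congrArg ofLex h
      simp only [ofLex_toLex, Prod.mk.injEq] at h'
      exact Edge.ext h'.2 h'.1)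

lemma edge_lt_def (e f : Edge n) : e < f ↔
    e.lab < f.lab ∨ (e.lab = f.lab ∧ (exists_left_order n).choose.lt e.src f.src) := by
  let _ := (exists_left_order n).choose
  change toLex (e.lab, e.src) < toLex (f.lab, f.src) ↔ _
  rw [Prod.Lex.toLex_lt_toLex]

lemma lt_smul_of_lt {e f : Edge n} (g : Fr n) (h : e < f) : g • e < g • f := by
  rw [edge_lt_def] at h ⊢
  rcases h with h | ⟨h1, h2⟩
  · exact Or.inl h
  · exact Or.inr ⟨h1, (exists_left_order n).choose_spec g _ _ h2⟩

lemma smul_lt_smul_iff' {e f : Edge n} (g : Fr n) : g • e < g • f ↔ e < f := by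
  refine ⟨fun h => ?_, lt_smul_of_lt g⟩
  have := lt_smul_of_lt g⁻¹ h
  simpa using this

lemma lt_of_lab_lt {e f : Edge n} (h : e.lab < f.lab) : e < f := by
  rw [edge_lt_def]; exact Or.inl h

lemma lab_le_of_lt {e f : Edge n} (h : e < f) : e.lab ≤ f.lab := by
  rw [edge_lt_def] at h
  rcases h with h | h
  · exact h.le
  · exact h.1.le

/-- the set of vertices of `V` that can be reached from `u` using edges smaller than `e` -/
def Cl (V : Set (Fr n)) (e : Edge n) (u : Fr n) : Set (Fr n) :=
  {w | w ∈ V ∧ ∀ f ∈ Sep u w, f < e}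

def EV (V : Set (Fr n)) : Set (Edge n) := {e | e.src ∈ V ∧ e.tgt ∈ V}

def Ess (V : Set (Fr n)) : Set (Edge n) :=
  {e | e ∈ EV V ∧ (Cl V e e.src).Infinite ∧ (Cl V e e.tgt).Infinite}

structure Good (K : Subgroup (Fr n)) (V : Set (Fr n)) : Prop where
  ne : V.Nonempty
  cvx : ∀ u ∈ V, ∀ v ∈ V, ∀ e ∈ Sep u v, e.src ∈ V ∧ e.tgt ∈ V
  inv : ∀ k ∈ K, ∀ v ∈ V, k * v ∈ V
  fin : ∃ B : Set (Fr n), B.Finite ∧ ∀ v ∈ V, ∃ k ∈ K, ∃ b ∈ B, v = k * b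

lemma Good.inv_iff {K : Subgroup (Fr n)} {V : Set (Fr n)} (h : Good K V) {k : Fr n} (hk : k ∈ K)
    (v : Fr n) : k * v ∈ V ↔ v ∈ V := by
  refine ⟨fun hv => ?_, h.inv k hk v⟩
  have := h.inv k⁻¹ (K.inv_mem hk) _ hv
  simpa using this

lemma cl_self {V : Set (Fr n)} {u : Fr n} (e : Edge n) (hu : u ∈ V) : u ∈ Cl V e u :=
  ⟨hu, by simp⟩

lemma cl_congr {V : Set (Fr n)} {u w : Fr n} {e : Edge n} (h : ∀ f ∈ Sep u w, f < e) :
    Cl V e w = Cl V e u := by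
  ext x
  refine and_congr_right fun _ => ⟨fun hx f hf => ?_, fun hx f hf => ?_⟩
  · rcases sep_tri (v := w) hf with h1 | h1
    · exact h f h1
    · exact hx f h1
  · rcases sep_tri (v := u) hf with h1 | h1
    · rw [sep_comm] at h1; exact h f h1
    · exact hx f h1

lemma cl_mono {V W : Set (Fr n)} {u : Fr n} {e e' : Edge n} (hV : V ⊆ W) (h : e ≤ e') :
    Cl V e u ⊆ Cl W e' u := fun _ hx => ⟨hV hx.1, fun f hf => (hx.2 f hf).trans_le h⟩

lemma sep_lt_smul {g u w : Fr n} {e : Edge n} (h : ∀ f ∈ Sep u w, f < e) :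
    ∀ f ∈ Sep (g * u) (g * w), f < g • e := by
  intro f hf
  rw [mem_sep_smul'] at hf
  have := lt_smul_of_lt g (h _ hf)
  simpa using this

lemma Good.cl_smul {K : Subgroup (Fr n)} {V : Set (Fr n)} (h : Good K V) {k : Fr n} (hk : k ∈ K)
    (e : Edge n) (u : Fr n) : Cl V (k • e) (k * u) = (fun x => k * x) '' Cl V e u := by
  ext x
  constructor
  · intro hx
    refine ⟨k⁻¹ * x, ⟨h.inv _ (K.inv_mem hk) _ hx.1, ?_⟩, by simp⟩
    have := sep_lt_smul (g := k⁻¹) hx.2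
    simpa using this
  · rintro ⟨y, hy, rfl⟩
    exact ⟨h.inv _ hk _ hy.1, sep_lt_smul hy.2⟩

lemma Good.cl_smul_finite {K : Subgroup (Fr n)} {V : Set (Fr n)} (h : Good K V) {k : Fr n}
    (hk : k ∈ K) (e : Edge n) (u : Fr n) :
    (Cl V (k • e) (k * u)).Finite ↔ (Cl V e u).Finite := by
  rw [h.cl_smul hk]
  exact Set.finite_image_iff (mul_right_injective k).injOn

lemma jn_ess {V : Set (Fr n)} {e : Edge n} {u v : Fr n} (h : Jn e u v) :
    e ∈ Ess V ↔ u ∈ V ∧ v ∈ V ∧ (Cl V e u).Infinite ∧ (Cl V e v).Infinite := by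
  rcases h with ⟨rfl, rfl⟩ | ⟨rfl, rfl⟩
  · simp only [Ess, EV, Set.mem_ofPred_eq]; tauto
  · simp only [Ess, EV, Set.mem_ofPred_eq]; tauto

lemma jn_ev {V : Set (Fr n)} {e : Edge n} {u v : Fr n} (h : Jn e u v) :
    e ∈ EV V ↔ u ∈ V ∧ v ∈ V := by
  rcases h with ⟨rfl, rfl⟩ | ⟨rfl, rfl⟩
  · rfl
  · exact And.comm

lemma Good.ev_smul {K : Subgroup (Fr n)} {V : Set (Fr n)} (h : Good K V) {k : Fr n} (hk : k ∈ K)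
    (e : Edge n) : k • e ∈ EV V ↔ e ∈ EV V := by
  simp only [EV, Set.mem_ofPred_eq, smul_src, smul_tgt, h.inv_iff hk]

lemma Good.ess_smul {K : Subgroup (Fr n)} {V : Set (Fr n)} (h : Good K V) {k : Fr n} (hk : k ∈ K)
    (e : Edge n) : k • e ∈ Ess V ↔ e ∈ Ess V := by
  simp only [Ess, Set.mem_ofPred_eq, h.ev_smul hk, smul_src, smul_tgt, Set.Infinite,
    h.cl_smul_finite hk]

lemma edges_at_finite {D : Set (Fr n)} (hD : D.Finite) :
    {e : Edge n | e.src ∈ D ∨ e.tgt ∈ D}.Finite := by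
  have h1 : {e : Edge n | e.src ∈ D}.Finite := by
    refine ((hD.prod (Set.finite_univ (α := Fin n))).image (fun x => (⟨x.1, x.2⟩ : Edge n))).subset ?_
    intro e he
    exact ⟨(e.src, e.lab), ⟨he, trivial⟩, rfl⟩
  have h2 : {e : Edge n | e.tgt ∈ D}.Finite := by
    refine ((hD.prod (Set.finite_univ (α := Fin n))).image
      (fun x => (⟨x.1 * (FreeGroup.of x.2)⁻¹, x.2⟩ : Edge n))).subset ?_
    intro e he
    refine ⟨(e.tgt, e.lab), ⟨he, trivial⟩, ?_⟩
    simp [Edge.tgt]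
  exact h1.union h2

lemma Jn.at_left {e : Edge n} {u v : Fr n} {D : Set (Fr n)} (h : Jn e u v) (hu : u ∈ D) :
    e.src ∈ D ∨ e.tgt ∈ D := by
  rcases h with ⟨rfl, rfl⟩ | ⟨rfl, rfl⟩
  · exact Or.inl hu
  · exact Or.inr hu

lemma Jn.eq_or {e : Edge n} {u v u' v' : Fr n} (h : Jn e u v) (h' : Jn e u' v') :
    (u = u' ∧ v = v') ∨ (u = v' ∧ v = u') := by
  rcases h with ⟨rfl, rfl⟩ | ⟨rfl, rfl⟩ <;> rcases h' with ⟨rfl, rfl⟩ | ⟨rfl, rfl⟩ <;> simp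

/-! #### Outlets -/

def Outlet (V : Set (Fr n)) (v p q : Fr n) (m : Edge n) : Prop :=
  Jn m p q ∧ q ∈ V ∧ p ∈ Cl V m v ∧ (Cl V m v).Finite

lemma outlet_aux {K : Subgroup (Fr n)} {V : Set (Fr n)} (h : Good K V) {v p q q' : Fr n}
    {m : Edge n} {a : Fr n} (ha : a ∈ K) (o : Outlet V v p q m)
    (o' : Outlet V v (a * p) q' (a • m)) : ¬ m < a • m := by
  intro hlt
  obtain ⟨hj, hq, hp, hfin⟩ := o
  obtain ⟨hj', hq', hp', hfin'⟩ := o'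
  have hlt' : a⁻¹ • m < m := by
    have := lt_smul_of_lt a⁻¹ hlt
    simpa using this
  have hS : ∀ f ∈ Sep p (a * p), f < a • m := by
    intro f hf
    rcases sep_tri (v := v) hf with h1 | h1
    · rw [sep_comm] at h1; exact (hp.2 f h1).trans hlt
    · exact hp'.2 f h1
  have hS' : ∀ f ∈ Sep p (a⁻¹ * p), f < m := by
    have := sep_lt_smul (g := a⁻¹) hS
    simp only [inv_mul_cancel_left, inv_smul_smul] at this
    rw [sep_comm]; exact this
  have hall : ∀ k : ℕ, (a⁻¹) ^ k * p ∈ Cl V m p := by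
    intro k
    induction k with
    | zero => simpa using cl_self m hp.1
    | succ k ih =>
      refine ⟨?_, ?_⟩
      · rw [pow_succ', mul_assoc]; exact h.inv _ (K.inv_mem ha) _ ih.1
      · intro f hf
        rw [pow_succ', mul_assoc] at hf
        rcases sep_tri (v := a⁻¹ * p) hf with h1 | h1
        · exact hS' f h1
        · exact (sep_lt_smul ih.2 f h1).trans hlt'
  rw [← cl_congr hp.2] at hfin
  have hanti : StrictAnti (fun k : ℕ => (a⁻¹) ^ k • m) := by
    refine strictAnti_nat_of_succ_lt fun k => ?_
    rw [pow_succ, mul_smul]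
    exact lt_smul_of_lt _ hlt'
  have hinj : Function.Injective (fun k : ℕ => (a⁻¹) ^ k * p) := by
    intro i j hij
    apply hanti.injective
    have := mul_right_cancel hij
    simp only [this]
  exact Set.infinite_of_injective_forall_mem hinj hall hfin

lemma outlets_finite {K : Subgroup (Fr n)} {V : Set (Fr n)} (h : Good K V) (v : Fr n) :
    {m | ∃ p q, Outlet V v p q m}.Finite := by
  classical
  obtain ⟨B, hB, hBV⟩ := h.fin
  have key : ∀ m ∈ {m | ∃ p q, Outlet V v p q m}, ∃ x : Edge n × Fr n,
      x ∈ {e : Edge n | e.src ∈ B ∨ e.tgt ∈ B} ×ˢ B ∧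
      ∃ k ∈ K, m = k • x.1 ∧ ∃ q, Outlet V v (k * x.2) q m := by
    rintro m ⟨p, q, o⟩
    obtain ⟨k, hk, b, hb, rfl⟩ := hBV p o.2.2.1.1
    refine ⟨(k⁻¹ • m, b), ⟨?_, hb⟩, k, hk, by simp, q, o⟩
    have := o.1.smul k⁻¹
    rw [inv_mul_cancel_left] at this
    exact this.at_left hb
  choose! F hF1 hF2 using key
  refine Set.Finite.of_injOn (f := F) (t := {e : Edge n | e.src ∈ B ∨ e.tgt ∈ B} ×ˢ B)
    (fun m hm => hF1 m hm) ?_ ((edges_at_finite hB).prod hB)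
  intro m hm m' hm' heq
  have aux : ∀ m m', m ∈ {m | ∃ p q, Outlet V v p q m} → m' ∈ {m | ∃ p q, Outlet V v p q m} →
      F m = F m' → ¬ m < m' := by
    intro m m' hm hm' heq hlt
    obtain ⟨k, hk, e1, q, o⟩ := hF2 m hm
    obtain ⟨k', hk', e1', q', o'⟩ := hF2 m' hm'
    rw [← heq] at e1' o'
    have e2 : m' = (k' * k⁻¹) • m := by rw [e1, smul_smul, e1']; simp
    have e3 : k' * (F m).2 = (k' * k⁻¹) * (k * (F m).2) := by group
    rw [e3, e2] at o'
    exact outlet_aux h (K.mul_mem hk' (K.inv_mem hk)) o o' (e2 ▸ hlt)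
  rcases lt_trichotomy m m' with h1 | h1 | h1
  · exact absurd h1 (aux m m' hm hm' heq)
  · exact h1
  · exact absurd h1 (aux m' m hm' hm heq.symm)

lemma exists_exit {K : Subgroup (Fr n)} {V : Set (Fr n)} (h : Good K V) {D : Set (Fr n)}
    (hDV : D ⊆ V) {w : Fr n} (hw : w ∈ V) (hwD : w ∉ D) :
    ∀ N u, u ∈ D → (Sep u w).ncard ≤ N →
      ∃ f ∈ Sep u w, ∃ p q, Jn f p q ∧ p ∈ D ∧ q ∈ V ∧ q ∉ D := by
  intro N
  induction N with
  | zero =>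
    intro u hu hN
    obtain ⟨e, u', -, he2, -⟩ := exists_step (u := u) (t := w) (fun h => hwD (h ▸ hu))
    rw [Nat.le_zero, Set.ncard_eq_zero (sep_finite _ _)] at hN
    rw [hN] at he2; exact absurd he2 (by simp)
  | succ N ih =>
    intro u hu hN
    obtain ⟨e, u', he1, he2, he3⟩ := exists_step (u := u) (t := w) (fun h => hwD (h ▸ hu))
    have hu' : u' ∈ V := ((jn_ev he1).1 (h.cvx u (hDV hu) w hw e he2)).2
    by_cases hD : u' ∈ D
    · obtain ⟨f, hf, r⟩ := ih u' hD (by have := step_ncard he2 he3; omega)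
      refine ⟨f, ?_, r⟩
      rw [he3] at hf; exact hf.1
    · exact ⟨e, he2, u, u', he1, hu, hu', hD⟩

lemma next_outlet {K : Subgroup (Fr n)} {V : Set (Fr n)} (h : Good K V) (hV : V.Infinite)
    {D : Set (Fr n)} (hD : D.Finite) (hDV : D ⊆ V) {v : Fr n} (hv : v ∈ D)
    (hb : ∀ f p q, Jn f p q → p ∈ D → q ∈ V → q ∉ D → ∀ u ∈ D, ∀ g ∈ Sep v u, g < f) :
    ∃ p q m, Outlet V v p q m ∧ p ∈ D ∧ q ∉ D := by
  obtain ⟨w, hw, hwD⟩ := hV.exists_notMem_finite hD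
  let Bd : Set (Edge n) := {f | ∃ p q, Jn f p q ∧ p ∈ D ∧ q ∈ V ∧ q ∉ D}
  have hfin : Bd.Finite := (edges_at_finite hD).subset (by
    rintro f ⟨p, q, hj, hp, -⟩
    exact hj.at_left hp)
  have hne : Bd.Nonempty := by
    obtain ⟨f, -, hf⟩ := exists_exit h hDV hw hwD _ v hv le_rfl
    exact ⟨f, hf⟩
  obtain ⟨m, ⟨p, q, hj, hp, hq, hqD⟩, hmin⟩ := hfin.exists_minimalFor id Bd hne
  have hle : ∀ f ∈ Bd, m ≤ f := fun f hf => by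
    rcases le_total m f with h | h
    · exact h
    · exact hmin hf h
  have hcl : Cl V m v = D := by
    ext w
    constructor
    · intro hw
      by_contra hwD
      obtain ⟨f, hf1, hf⟩ := exists_exit h hDV hw.1 hwD _ v hv le_rfl
      exact absurd (hw.2 f hf1) (not_lt.2 (hle f hf))
    · intro hw
      exact ⟨hDV hw, fun g hg => hb m p q hj hp hq hqD w hw g hg⟩
  refine ⟨p, q, m, ⟨hj, hq, ?_, ?_⟩, hp, hqD⟩
  · rw [hcl]; exact hp
  · rw [hcl]; exact hD

def Thr (V : Set (Fr n)) (v p q : Fr n) (m : Edge n) : Prop :=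
  Jn m p q ∧ q ∈ V ∧ p ∈ Cl V m v ∧ (Cl V m v).Finite ∧ (Cl V m q).Infinite

lemma exists_thr {K : Subgroup (Fr n)} {V : Set (Fr n)} (h : Good K V) (hV : V.Infinite)
    {v : Fr n} (hv : v ∈ V) : ∃ p q m, Thr V v p q m := by
  have hne : {m | ∃ p q, Outlet V v p q m}.Nonempty := by
    obtain ⟨p, q, m, o, -⟩ := next_outlet h hV (Set.finite_singleton v) (by simpa using hv) rfl
      (by intro f p q _ _ _ _ u hu g hg
          rw [Set.mem_singleton_iff] at hu
          subst hu; simp at hg)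
    exact ⟨m, p, q, o⟩
  obtain ⟨m, ⟨p, q, o⟩, hmax⟩ := (outlets_finite h v).exists_maximalFor id _ hne
  obtain ⟨hj, hq, hp, hfin⟩ := o
  refine ⟨p, q, m, hj, hq, hp, hfin, ?_⟩
  let D : Set (Fr n) := {u | u ∈ V ∧ ∀ f ∈ Sep v u, f ≤ m}
  have hbd : ∀ f p q, Jn f p q → p ∈ D → q ∈ V → q ∉ D → m < f := by
    intro f p q hj hp hq hqD
    by_contra hc
    refine hqD ⟨hq, fun g hg => ?_⟩
    rcases sep_tri (v := p) hg with h1 | h1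
    · exact hp.2 g h1
    · rw [sep_jn hj] at h1
      rw [Set.mem_singleton_iff.1 h1]
      exact not_lt.1 hc
  have hD : D.Infinite := by
    intro hD
    obtain ⟨p', q', m', o', hp', hq'⟩ := next_outlet (v := v) h hV hD (fun u hu => hu.1)
      ⟨hv, by simp⟩ (fun f p q hj hp hq hqD u hu g hg =>
        (hu.2 g hg).trans_lt (hbd f p q hj hp hq hqD))
    have h1 := hbd m' p' q' o'.1 hp' o'.2.1 hq'
    exact absurd (hmax (j := m') ⟨p', q', o'⟩ h1.le) (not_le.2 h1)
  intro hfin2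
  refine hD ((hfin.union hfin2).subset ?_)
  intro u hu
  by_cases hm : m ∈ Sep v u
  · right
    refine ⟨hu.1, fun f hf => ?_⟩
    have hne : f ≠ m := by
      rintro rfl
      have h1 : f ∈ Sep p q := by rw [sep_jn hj]; rfl
      have h2 : f ∉ Sep v p := fun h => lt_irrefl _ (hp.2 f h)
      have e1 := sep_xor v q u f
      have e2 := sep_xor v p q f
      tauto
    refine lt_of_le_of_ne ?_ hne
    rcases sep_tri (v := p) hf with h1 | h1
    · rw [sep_comm, sep_jn hj] at h1
      exact (Set.mem_singleton_iff.1 h1).le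
    · rcases sep_tri (v := v) h1 with h2 | h2
      · rw [sep_comm] at h2; exact (hp.2 f h2).le
      · exact hu.2 f h2
  · left
    exact ⟨hu.1, fun f hf => lt_of_le_of_ne (hu.2 f hf) (by rintro rfl; exact hm hf)⟩

lemma thr_not_lt {V : Set (Fr n)} {v p q p' q' : Fr n} {m m' : Edge n}
    (t : Thr V v p q m) (t' : Thr V v p' q' m') : ¬ m < m' := by
  intro hlt
  have : ∀ f ∈ Sep v q, f < m' := by
    intro f hf
    rcases sep_tri (v := p) hf with h1 | h1
    · exact (t.2.2.1.2 f h1).trans hlt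
    · rw [sep_jn t.1] at h1
      rw [Set.mem_singleton_iff.1 h1]; exact hlt
  have h2 := cl_congr (V := V) this
  have h3 : Cl V m q ⊆ Cl V m' q := cl_mono subset_rfl hlt.le
  rw [h2] at h3
  exact t.2.2.2.2 (t'.2.2.2.1.subset h3)

lemma thr_unique {V : Set (Fr n)} {v p q p' q' : Fr n} {m m' : Edge n}
    (t : Thr V v p q m) (t' : Thr V v p' q' m') : m = m' ∧ p = p' ∧ q = q' := by
  have hm : m = m' := by
    rcases lt_trichotomy m m' with h1 | h1 | h1
    · exact absurd h1 (thr_not_lt t t')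
    · exact h1
    · exact absurd h1 (thr_not_lt t' t)
  subst hm
  refine ⟨rfl, ?_⟩
  rcases t.1.eq_or t'.1 with h1 | ⟨h1, h2⟩
  · exact h1
  · exfalso
    apply t.2.2.2.2
    rw [h2, cl_congr t'.2.2.1.2]
    exact t.2.2.2.1

lemma thr_mem {V : Set (Fr n)} {v p q : Fr n} {m : Edge n} (t : Thr V v p q m) :
    m ∈ Sep v q := by
  have h1 : m ∉ Sep v p := fun h => lt_irrefl _ (t.2.2.1.2 m h)
  rw [mem_sep_jn t.1]; tauto

lemma thr_le {V : Set (Fr n)} {v p q : Fr n} {m e : Edge n} (t : Thr V v p q m)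
    (he : e ∈ Sep v q) : e ≤ m := by
  rcases sep_tri (v := p) he with h1 | h1
  · exact (t.2.2.1.2 e h1).le
  · rw [sep_jn t.1] at h1
    exact (Set.mem_singleton_iff.1 h1).le

lemma Good.thr_smul {K : Subgroup (Fr n)} {V : Set (Fr n)} (h : Good K V) {k : Fr n}
    (hk : k ∈ K) {v p q : Fr n} {m : Edge n} (t : Thr V v p q m) :
    Thr V (k * v) (k * p) (k * q) (k • m) := by
  obtain ⟨h1, h2, h3, h4, h5⟩ := t
  refine ⟨h1.smul k, h.inv k hk _ h2, ?_, ?_, ?_⟩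
  · rw [h.cl_smul hk]; exact ⟨p, h3, rfl⟩
  · rw [h.cl_smul_finite hk]; exact h4
  · rw [Set.Infinite, h.cl_smul_finite hk]; exact h5

/-- the first edge on the way from `v` to its threshold -/
def Phi (V : Set (Fr n)) (v : Fr n) (e : Edge n) : Prop :=
  ∃ p q m, Thr V v p q m ∧ e ∈ Sep v q ∧ ∃ w, Jn e v w

lemma Good.phi_smul {K : Subgroup (Fr n)} {V : Set (Fr n)} (h : Good K V) {k : Fr n}
    (hk : k ∈ K) {v : Fr n} {e : Edge n} (t : Phi V v e) : Phi V (k * v) (k • e) := by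
  obtain ⟨p, q, m, t, he, w, hw⟩ := t
  exact ⟨_, _, _, h.thr_smul hk t, (mem_sep_smul _ _ _ _).2 he, _, hw.smul k⟩

lemma Good.exists_phi {K : Subgroup (Fr n)} {V : Set (Fr n)} (h : Good K V) (hV : V.Infinite)
    {v : Fr n} (hv : v ∈ V) : ∃ e ∈ EV V \ Ess V, Phi V v e := by
  obtain ⟨p, q, m, t⟩ := exists_thr h hV hv
  have hne : q ≠ v := by
    rintro rfl
    have := thr_mem t
    simp at this
  obtain ⟨e, w, hj, he, -⟩ := exists_step hne
  refine ⟨e, ⟨h.cvx v hv q t.2.1 e he, ?_⟩, p, q, m, t, he, w, hj⟩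
  rw [jn_ess hj]
  rintro ⟨-, -, h3, -⟩
  exact h3 (t.2.2.2.1.subset (cl_mono subset_rfl (thr_le t he)))

lemma phi_unique {V : Set (Fr n)} {v : Fr n} {e e' : Edge n} (t : Phi V v e) (t' : Phi V v e') :
    e = e' := by
  obtain ⟨p, q, m, t, he, w, hw⟩ := t
  obtain ⟨p', q', m', t', he', w', hw'⟩ := t'
  obtain ⟨rfl, rfl, rfl⟩ := thr_unique t t'
  exact local_unique hw he hw' he'

lemma thr_trans {V : Set (Fr n)} {v v' p q : Fr n} {m : Edge n} (t : Thr V v p q m)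
    (hs : ∀ f ∈ Sep v v', f < m) : Thr V v' p q m := by
  obtain ⟨h1, h2, h3, h4, h5⟩ := t
  refine ⟨h1, h2, ?_, ?_, h5⟩
  · rw [cl_congr hs]; exact h3
  · rw [cl_congr hs]; exact h4

lemma phi_inj {V : Set (Fr n)} {v v' : Fr n} {e : Edge n}
    (t : Phi V v e) (t' : Phi V v' e) : v = v' := by
  obtain ⟨p, q, m, t, he, w, hw⟩ := t
  obtain ⟨p', q', m', t', he', w', hw'⟩ := t'
  by_contra hne
  have hj : Jn e v v' := by
    rcases hw.eq_or hw' with ⟨h1, h2⟩ | ⟨h1, h2⟩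
    · exact absurd h1 hne
    · rw [← h2]; exact hw
  have hsep := sep_jn hj
  have case1 : ∀ {v v' p q p' q' : Fr n} {m m' : Edge n}, Jn e v v' → Thr V v p q m →
      Thr V v' p' q' m' → e ∈ Sep v q → e ∈ Sep v' q' → e < m → False := by
    intro v v' p q p' q' m m' hj t t' he he' hlt
    have hsep := sep_jn hj
    have t2 := thr_trans t (v' := v') (by rw [hsep]; rintro f rfl; exact hlt)
    obtain ⟨rfl, rfl, rfl⟩ := thr_unique t2 t'
    have h1 : e ∈ Sep v v' := by rw [hsep]; rfl
    have := sep_xor v v' q e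
    tauto
  rcases (thr_le t he).lt_or_eq with h1 | h1
  · exact case1 hj t t' he he' h1
  rcases (thr_le t' he').lt_or_eq with h2 | h2
  · exact case1 hj.symm t' t he' he h2
  subst h1
  subst h2
  -- both thresholds equal to `e`
  have hp : p = v := by
    rcases t.1.eq_or hj with h3 | h3
    · exact h3.1
    · exfalso
      have := t.2.2.1.2 e (by rw [h3.1, hsep]; rfl)
      exact lt_irrefl _ this
  have hq : q = v' := by
    rcases t.1.eq_or hj with h3 | h3
    · exact h3.2
    · rw [h3.2, ← hp, h3.1]
  apply t.2.2.2.2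
  rw [hq]
  exact t'.2.2.2.1

lemma Good.phi_surj {K : Subgroup (Fr n)} {V : Set (Fr n)} (h : Good K V) (hV : V.Infinite)
    {e : Edge n} (he : e ∈ EV V \ Ess V) : ∃ v ∈ V, Phi V v e := by
  have key : ∀ u u', Jn e u u' → (Cl V e u).Finite → ∃ v ∈ V, Phi V v e := by
    intro u u' hj hfin
    obtain ⟨hu, hu'⟩ := (jn_ev hj).1 he.1
    have hsep := sep_jn hj
    by_cases hinf : (Cl V e u').Infinite
    · refine ⟨u, hu, u, u', e, ⟨hj, hu', cl_self e hu, hfin, hinf⟩, ?_, u', hj⟩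
      rw [hsep]; rfl
    · obtain ⟨p, q, m, t⟩ := exists_thr h hV hu
      have hlt : e < m := by
        by_contra hc
        rw [not_lt] at hc
        rcases hc.lt_or_eq with h1 | h1
        · have h2 : Cl V m q ⊆ Cl V e q := cl_mono subset_rfl hc
          have h3 : Cl V e q = Cl V e u := cl_congr (fun f hf => (thr_le t hf).trans_lt h1)
          rw [h3] at h2
          exact t.2.2.2.2 (hfin.subset h2)
        · subst h1
          rcases t.1.eq_or hj with h3 | h3
          · rw [← h3.2] at hinf; exact hinf t.2.2.2.2
          · have := t.2.2.2.2
            rw [h3.2] at this; exact this hfin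
      have t' : Thr V u' p q m := thr_trans t (by rw [hsep]; rintro f rfl; exact hlt)
      have h1 : e ∈ Sep u u' := by rw [hsep]; rfl
      have h2 : e ∈ Sep u q ∨ e ∈ Sep u' q := by
        have := sep_xor u u' q e
        tauto
      rcases h2 with h2 | h2
      · exact ⟨u, hu, p, q, m, t, h2, u', hj⟩
      · exact ⟨u', hu', p, q, m, t', h2, u, hj.symm⟩
  have hne := he.2
  rw [jn_ess (jn_self e)] at hne
  by_cases h1 : (Cl V e e.src).Finite
  · exact key _ _ (jn_self e) h1
  · by_cases h2 : (Cl V e e.tgt).Finite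
    · exact key _ _ (jn_self e).symm h2
    · exact absurd ⟨he.1.1, he.1.2, h1, h2⟩ hne

/-! #### Counting orbits -/
section cnt
variable {α β : Type} [MulAction (Fr n) α] [MulAction (Fr n) β]

def orb (K : Subgroup (Fr n)) (a : α) : MulAction.orbitRel.Quotient K α := Quotient.mk'' a

lemma orb_eq {K : Subgroup (Fr n)} {a b : α} : orb K a = orb K b ↔ ∃ k ∈ K, k • a = b := by
  rw [orb, orb, Quotient.eq'', MulAction.orbitRel_apply, MulAction.mem_orbit_iff]
  constructor
  · rintro ⟨k, rfl⟩
    exact ⟨k⁻¹, (k⁻¹).2, by simp [Subgroup.smul_def]⟩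
  · rintro ⟨k, hk, rfl⟩
    exact ⟨⟨k⁻¹, K.inv_mem hk⟩, by simp [Subgroup.smul_def]⟩

noncomputable def cnt (K : Subgroup (Fr n)) (A : Set α) : ℕ := (orb K '' A).ncard

lemma cnt_le {K L : Subgroup (Fr n)} {A : Set α} {B : Set β} (R : α → β → Prop)
    (hB : (orb L '' B).Finite) (htot : ∀ a ∈ A, ∃ b ∈ B, R a b)
    (hinj : ∀ a ∈ A, ∀ a' ∈ A, ∀ b ∈ B, ∀ b' ∈ B, R a b → R a' b' →
      orb L b = orb L b' → orb K a = orb K a') : cnt K A ≤ cnt L B := by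
  have key : ∀ x ∈ orb K '' A, ∃ y ∈ orb L '' B, ∃ a ∈ A, ∃ b ∈ B, R a b ∧ orb K a = x ∧
      orb L b = y := by
    rintro x ⟨a, ha, rfl⟩
    obtain ⟨b, hb, hR⟩ := htot a ha
    exact ⟨_, ⟨b, hb, rfl⟩, a, ha, b, hb, hR, rfl, rfl⟩
  rcases A.eq_empty_or_nonempty with rfl | ⟨a0, ha0⟩
  · simp [cnt]
  obtain ⟨b0, hb0, -⟩ := htot a0 ha0
  have : Nonempty (MulAction.orbitRel.Quotient L β) := ⟨orb L b0⟩
  choose! F hF1 hF2 using key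
  refine Set.ncard_le_ncard_of_injOn F hF1 ?_ hB
  intro x hx x' hx' heq
  obtain ⟨a, ha, b, hb, hR, rfl, e2⟩ := hF2 x hx
  obtain ⟨a', ha', b', hb', hR', rfl, e2'⟩ := hF2 x' hx'
  exact hinj a ha a' ha' b hb b' hb' hR hR' (by rw [e2, e2', heq])
end cnt

lemma Good.fin_V {K : Subgroup (Fr n)} {V : Set (Fr n)} (h : Good K V) :
    (orb K '' V).Finite := by
  obtain ⟨B, hB, hBV⟩ := h.fin
  refine (hB.image (orb K)).subset ?_
  rintro _ ⟨v, hv, rfl⟩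
  obtain ⟨k, hk, b, hb, rfl⟩ := hBV v hv
  exact ⟨b, hb, orb_eq.2 ⟨k, hk, rfl⟩⟩

lemma Good.fin_EV {K : Subgroup (Fr n)} {V : Set (Fr n)} (h : Good K V) :
    (orb K '' EV V).Finite := by
  obtain ⟨B, hB, hBV⟩ := h.fin
  refine ((edges_at_finite hB).image (orb K)).subset ?_
  rintro _ ⟨e, he, rfl⟩
  obtain ⟨k, hk, b, hb, hkb⟩ := hBV e.src he.1
  refine ⟨k⁻¹ • e, Or.inl ?_, orb_eq.2 ⟨k, hk, by simp⟩⟩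
  simpa [hkb] using hb

lemma ess_sub_ev (V : Set (Fr n)) : Ess V ⊆ EV V := fun _ he => he.1

lemma Good.fin_Ess {K : Subgroup (Fr n)} {V : Set (Fr n)} (h : Good K V) :
    (orb K '' Ess V).Finite := h.fin_EV.subset (Set.image_mono (ess_sub_ev V))

theorem Good.cnt_eq {K : Subgroup (Fr n)} {V : Set (Fr n)} (h : Good K V) (hV : V.Infinite) :
    cnt K V = cnt K (EV V \ Ess V) := by
  refine le_antisymm ?_ ?_
  · refine cnt_le (Phi V) (h.fin_EV.subset (Set.image_mono Set.sdiff_subset))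
      (fun v hv => h.exists_phi hV hv) ?_
    intro v hv v' hv' e he e' he' hR hR' heq
    obtain ⟨k, hk, rfl⟩ := orb_eq.1 heq
    exact orb_eq.2 ⟨k, hk, phi_inj (h.phi_smul hk hR) hR'⟩
  · refine cnt_le (fun e v => Phi V v e) h.fin_V (fun e he => h.phi_surj hV he) ?_
    intro e he e' he' v hv v' hv' hR hR' heq
    obtain ⟨k, hk, rfl⟩ := orb_eq.1 heq
    exact orb_eq.2 ⟨k, hk, phi_unique (h.phi_smul hk hR) hR'⟩

theorem Good.cnt_ev {K : Subgroup (Fr n)} {V : Set (Fr n)} (h : Good K V) (hV : V.Infinite) :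
    cnt K (EV V) = cnt K V + cnt K (Ess V) := by
  have hd : Disjoint (orb K '' (EV V \ Ess V)) (orb K '' Ess V) := by
    rw [Set.disjoint_left]
    rintro _ ⟨e, he, rfl⟩ ⟨f, hf, heq⟩
    obtain ⟨k, hk, rfl⟩ := orb_eq.1 heq
    exact he.2 ((h.ess_smul hk f).2 hf)
  rw [h.cnt_eq hV, cnt, cnt, cnt, ← Set.ncard_union_eq hd
    (h.fin_EV.subset (Set.image_mono Set.sdiff_subset)) h.fin_Ess, ← Set.image_union,
    Set.sdiff_union_of_subset (ess_sub_ev V)]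
end Ech

namespace Ech
/-! ### The rank formula -/
section homs

abbrev kk := ZMod 2

/-- homomorphisms to the additive group of the field with two elements -/
def Hm (G : Type) [Group G] : Submodule kk (G → kk) where
  carrier := {f | ∀ a b, f (a * b) = f a + f b}
  add_mem' := by
    intro f g hf hg a b
    simp only [Pi.add_apply, hf a b, hg a b]; abel
  zero_mem' := by intro a b; simp
  smul_mem' := by
    intro c f hf a b
    simp only [Pi.smul_apply, hf a b, smul_add]

lemma mem_Hm {G : Type} [Group G] {f : G → kk} : f ∈ Hm G ↔ ∀ a b, f (a * b) = f a + f b := Iff.rfl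

lemma Hm_one {G : Type} [Group G] {f : G → kk} (hf : f ∈ Hm G) : f 1 = 0 := by
  have := hf 1 1
  simpa using this

lemma Hm_inv {G : Type} [Group G] {f : G → kk} (hf : f ∈ Hm G) (a : G) : f a⁻¹ = - f a := by
  have := hf a⁻¹ a
  rw [inv_mul_cancel, Hm_one hf] at this
  exact eq_neg_of_add_eq_zero_left this.symm

def resMap (G : Type) [Group G] {X : Type} (b : X → G) : Hm G →ₗ[kk] (X → kk) where
  toFun f x := f.1 (b x)
  map_add' _ _ := rfl
  map_smul' _ _ := rfl

lemma resMap_inj (G : Type) [Group G] {X : Type} (b : X → G)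
    (hb : Subgroup.closure (Set.range b) = ⊤) : Function.Injective (resMap G b) := by
  rw [injective_iff_map_eq_zero]
  rintro ⟨f, hf⟩ h
  ext g
  have hg : g ∈ Subgroup.closure (Set.range b) := by rw [hb]; trivial
  change f g = 0
  induction hg using Subgroup.closure_induction with
  | mem x hx =>
    obtain ⟨i, rfl⟩ := hx
    exact congrFun h i
  | one => exact Hm_one hf
  | mul x y _ _ hx hy => rw [hf x y, hx, hy, add_zero]
  | inv x _ hx => rw [Hm_inv hf, hx, neg_zero]

lemma resMap_surj (G : Type) [Group G] {X : Type} (b : FreeGroupBasis X G) :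
    Function.Surjective (resMap G b) := by
  intro c
  let φ : G →* Multiplicative kk := b.lift (fun x => Multiplicative.ofAdd (c x))
  refine ⟨⟨fun g => (φ g).toAdd, fun x y => by simp⟩, ?_⟩
  ext x
  change (φ (b x)).toAdd = c x
  simp [φ]

lemma basis_closure (G : Type) [Group G] {X : Type} (b : FreeGroupBasis X G) :
    Subgroup.closure (Set.range b) = ⊤ := by
  have h : Set.range b = b.repr.symm '' (Set.range (FreeGroup.of : X → FreeGroup X)) := by
    ext g
    constructor
    · rintro ⟨x, rfl⟩
      exact ⟨FreeGroup.of x, ⟨x, rfl⟩, by simp [MulEquiv.symm_apply_eq]⟩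
    · rintro ⟨_, ⟨x, rfl⟩, rfl⟩
      exact ⟨x, by simp [MulEquiv.eq_symm_apply]⟩
  rw [h]
  change Subgroup.closure ((b.repr.symm.toMonoidHom : FreeGroup X → G) '' _) = ⊤
  rw [← MonoidHom.map_closure, FreeGroup.closure_range_of, ← MonoidHom.range_eq_map,
    MonoidHom.range_eq_top]
  exact b.repr.symm.surjective

lemma rk_le {G : Type} [Group G] {K : Subgroup G} {S : Set G} (h : Subgroup.closure S = K) :
    rk K ≤ Cardinal.mk S := ciInf_le' (fun S : {S : Set G // Subgroup.closure S = K} => Cardinal.mk S.1) ⟨S, h⟩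

lemma exists_rk {G : Type} [Group G] (K : Subgroup G) :
    ∃ S : Set G, Subgroup.closure S = K ∧ Cardinal.mk S = rk K := by
  have : Nonempty {S : Set G // Subgroup.closure S = K} := ⟨⟨K, Subgroup.closure_eq K⟩⟩
  obtain ⟨S, hS⟩ := ciInf_mem (fun S : {S : Set G // Subgroup.closure S = K} => Cardinal.mk S.1)
  exact ⟨S.1, S.2, hS⟩

lemma rank_fun_nat {X : Type} [Finite X] : Module.rank kk (X → kk) = Cardinal.mk X := by
  have := Fintype.ofFinite X
  rw [rank_fun', Cardinal.mk_fintype]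

theorem rk_eq_rank {G : Type} [Group G] [IsFreeGroup G] (K : Subgroup G)
    (hfin : Module.rank kk (Hm K) < Cardinal.aleph0) : rk K = Module.rank kk (Hm K) := by
  apply le_antisymm
  · let b := IsFreeGroup.basis K
    have e : Module.rank kk (Hm K) = Module.rank kk (IsFreeGroup.Generators K → kk) :=
      (LinearEquiv.ofBijective (resMap K b)
        ⟨resMap_inj K b (basis_closure K b), resMap_surj K b⟩).rank_eq
    have hX : Finite (IsFreeGroup.Generators K) := by
      by_contra hc
      rw [not_finite_iff_infinite] at hc
      rw [e, rank_fun_infinite] at hfin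
      have : Finite (IsFreeGroup.Generators K → kk) := Cardinal.lt_aleph0_iff_finite.1 hfin
      exact not_finite (IsFreeGroup.Generators K → kk)
    rw [e, rank_fun_nat]
    refine (rk_le (S := Set.range (fun x => (b x : G))) ?_).trans Cardinal.mk_range_le
    have h1 : Set.range (fun x => (b x : G)) = K.subtype '' Set.range b := by
      ext g; simp
    rw [h1, ← MonoidHom.map_closure, basis_closure, ← MonoidHom.range_eq_map, Subgroup.range_subtype]
  · obtain ⟨S, hS, hrk⟩ := exists_rk K
    rw [← hrk]
    by_cases hSf : S.Finite
    · have : Finite S := hSf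
      rw [← rank_fun_nat (X := S)]
      have hSK : ∀ s : S, (s : G) ∈ K := fun s => by rw [← hS]; exact Subgroup.subset_closure s.2
      refine LinearMap.rank_le_of_injective (resMap K (fun s : S => (⟨s.1, hSK s⟩ : K)))
        (resMap_inj K _ ?_)
      apply Subgroup.map_injective K.subtype_injective
      rw [MonoidHom.map_closure, ← MonoidHom.range_eq_map, Subgroup.range_subtype]
      refine Eq.trans ?_ hS
      congr 1
      ext g
      simp only [Set.mem_image, Set.mem_range, Subgroup.coe_subtype]
      constructor
      · rintro ⟨_, ⟨s, rfl⟩, rfl⟩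
        exact s.2
      · intro hg
        exact ⟨_, ⟨⟨g, hg⟩, rfl⟩, rfl⟩
    · refine hfin.le.trans ?_
      have : Infinite S := Set.infinite_coe_iff.2 hSf
      exact Cardinal.aleph0_le_mk S

end homs

section inv
variable {n : ℕ} {α : Type} [MulAction (Fr n) α]

lemma orb_smul {K : Subgroup (Fr n)} {k : Fr n} (hk : k ∈ K) (a : α) :
    orb K (k • a) = orb K a := (orb_eq.2 ⟨k, hk, rfl⟩).symm

lemma orb_mul {K : Subgroup (Fr n)} {k : Fr n} (hk : k ∈ K) (a : Fr n) :
    orb K (k * a) = orb K a := orb_smul hk a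

/-- functions constant on orbits -/
def Inv (K : Subgroup (Fr n)) (A : Set α) : Submodule kk (A → kk) where
  carrier := {f | ∀ a b : A, orb K a.1 = orb K b.1 → f a = f b}
  add_mem' := by
    intro f g hf hg a b h
    simp only [Pi.add_apply, hf a b h, hg a b h]
  zero_mem' := by intro a b _; rfl
  smul_mem' := by
    intro c f hf a b h
    simp only [Pi.smul_apply, hf a b h]

lemma rank_Inv (K : Subgroup (Fr n)) (A : Set α) (h : (orb K '' A).Finite) :
    Module.rank kk (Inv K A) = (cnt K A : Cardinal) := by
  let π : A → (orb K '' A : Set _) := fun a => ⟨orb K a.1, a.1, a.2, rfl⟩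
  have hπ : Function.Surjective π := by
    rintro ⟨_, a, ha, rfl⟩
    exact ⟨⟨a, ha⟩, rfl⟩
  have hinj := LinearMap.funLeft_injective_of_surjective kk kk π hπ
  have hr : LinearMap.range (LinearMap.funLeft kk kk π) = Inv K A := by
    ext f
    constructor
    · rintro ⟨g, rfl⟩ a b hab
      change g (π a) = g (π b)
      congr 1
      exact Subtype.ext hab
    · intro hf
      refine ⟨fun x => f (Function.surjInv hπ x), ?_⟩
      ext a
      change f (Function.surjInv hπ (π a)) = f a
      apply hf
      exact congrArg Subtype.val (Function.surjInv_eq hπ (π a))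
  have e := (LinearEquiv.ofInjective _ hinj).rank_eq
  rw [hr] at e
  have : Finite (orb K '' A : Set _) := h
  rw [← e, rank_fun_nat, cnt, Set.cast_ncard h]

end inv

section rankformula
variable {n : ℕ} {K : Subgroup (Fr n)} {V : Set (Fr n)}

/-- equivariant potentials -/
def Pot (h : Good K V) : Submodule kk ((V → kk) × (K → kk)) where
  carrier := {x | ∀ (κ : K) (v : V), x.1 ⟨κ * v, h.inv κ κ.2 v v.2⟩ = x.1 v + x.2 κ}
  add_mem' := by
    intro f g hf hg κ v
    simp only [Prod.fst_add, Prod.snd_add, Pi.add_apply, hf κ v, hg κ v]; abel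
  zero_mem' := by intro κ v; simp
  smul_mem' := by
    intro c f hf κ v
    simp only [Prod.smul_fst, Prod.smul_snd, Pi.smul_apply, hf κ v, smul_add]

def rhoMap (h : Good K V) : Pot h →ₗ[kk] (K → kk) :=
  (LinearMap.snd kk (V → kk) (K → kk)).comp (Pot h).subtype

def deltaMap (h : Good K V) : Pot h →ₗ[kk] (EV V → kk) where
  toFun x e := x.1.1 ⟨e.1.tgt, e.2.2⟩ - x.1.1 ⟨e.1.src, e.2.1⟩
  map_add' x y := by
    ext e
    simp only [Submodule.coe_add, Prod.fst_add, Pi.add_apply]; abel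
  map_smul' c x := by
    ext e
    simp only [Submodule.coe_smul, Prod.smul_fst, Pi.smul_apply, smul_sub, RingHom.id_apply]

lemma range_rho (h : Good K V) : LinearMap.range (rhoMap h) = Hm K := by
  ext f
  constructor
  · rintro ⟨⟨⟨p, f'⟩, hp⟩, rfl⟩
    intro a b
    change f' (a * b) = f' a + f' b
    obtain ⟨v, hv⟩ := h.ne
    have e1 := hp (a * b) ⟨v, hv⟩
    have e2 := hp b ⟨v, hv⟩
    have e3 := hp a ⟨b * v, h.inv b b.2 v hv⟩
    simp only [Subgroup.coe_mul, mul_assoc] at e1 e2 e3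
    rw [e1, e2] at e3
    have : p ⟨v, hv⟩ + f' (a * b) = p ⟨v, hv⟩ + (f' a + f' b) := by rw [e3]; abel
    exact add_left_cancel this
  · intro hf
    have key : ∀ v : Fr n, ∃ κ : K, (κ : Fr n) * (orb K v).out = v := by
      intro v
      have : orb K ((orb K v).out) = orb K v := Quotient.out_eq' _
      obtain ⟨k, hk, h2⟩ := orb_eq.1 this
      exact ⟨⟨k, hk⟩, h2⟩
    choose κ hκ using key
    refine ⟨⟨(fun v => f (κ v), f), ?_⟩, rfl⟩
    intro a v
    change f (κ (a * v)) = f (κ v) + f a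
    have e1 : orb K ((a : Fr n) * v.1) = orb K v.1 := orb_mul a.2 _
    have e2 := hκ (a * v)
    rw [e1] at e2
    have e3 : (κ (a * v.1) : Fr n) = a * κ v := by
      have e4 : (κ (a * v.1) : Fr n) * (orb K v.1).out = (a * κ v) * (orb K v.1).out := by
        rw [e2, mul_assoc, hκ]
      exact mul_right_cancel e4
    have e5 : κ (a * v.1) = a * κ v := Subtype.ext e3
    rw [e5, hf a, add_comm]

lemma rank_ker_rho (h : Good K V) :
    Module.rank kk (LinearMap.ker (rhoMap h)) = (cnt K V : Cardinal) := by
  let g : Inv K V →ₗ[kk] Pot h :=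
    { toFun := fun p => ⟨(p.1, 0), by
        intro κ v
        change p.1 _ = p.1 _ + 0
        rw [add_zero]
        exact p.2 _ _ (orb_mul κ.2 _)⟩
      map_add' := fun p q => by ext <;> simp
      map_smul' := fun c p => by ext <;> simp }
  have hg : Function.Injective g := by
    intro p q hpq
    apply Subtype.ext
    exact congrArg (fun x : Pot h => x.1.1) hpq
  have hr : LinearMap.range g = LinearMap.ker (rhoMap h) := by
    ext x
    constructor
    · rintro ⟨p, rfl⟩
      rfl
    · intro hx
      have hx' : x.1.2 = 0 := hx
      refine ⟨⟨x.1.1, ?_⟩, ?_⟩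
      · intro a b hab
        obtain ⟨k, hk, hk2⟩ := orb_eq.1 hab
        have := x.2 ⟨k, hk⟩ a
        rw [hx'] at this
        simp only [Pi.zero_apply, add_zero] at this
        rw [← this]
        exact congrArg x.1.1 (Subtype.ext hk2)
      · apply Subtype.ext
        exact Prod.ext rfl hx'.symm
  rw [← hr, ← (LinearEquiv.ofInjective g hg).rank_eq, rank_Inv K V h.fin_V]

lemma const_of_delta (h : Good K V) (p : V → kk)
    (hp : ∀ e : EV V, p ⟨e.1.tgt, e.2.2⟩ = p ⟨e.1.src, e.2.1⟩) :
    ∀ N (u w : V), (Sep u.1 w.1).ncard ≤ N → p u = p w := by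
  intro N
  induction N with
  | zero =>
    intro u w hN
    by_cases huw : w.1 = u.1
    · rw [Subtype.ext huw]
    · obtain ⟨e, u', -, he2, -⟩ := exists_step huw
      rw [Nat.le_zero, Set.ncard_eq_zero (sep_finite _ _)] at hN
      rw [hN] at he2; exact absurd he2 (by simp)
  | succ N ih =>
    intro u w hN
    by_cases huw : w.1 = u.1
    · rw [Subtype.ext huw]
    · obtain ⟨e, u', he1, he2, he3⟩ := exists_step huw
      have hev : e ∈ EV V := h.cvx u u.2 w w.2 e he2
      have hu' : u' ∈ V := ((jn_ev he1).1 hev).2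
      have h1 := ih ⟨u', hu'⟩ w (by have := step_ncard he2 he3; simp only; omega)
      rw [← h1]
      have h2 := hp ⟨e, hev⟩
      obtain ⟨u, hu⟩ := u
      rcases he1 with ⟨e1, e2⟩ | ⟨e1, e2⟩
      · simp only at e1 e2
        subst e1; subst e2
        exact h2.symm
      · simp only at e1 e2
        subst e1; subst e2
        exact h2

lemma rank_ker_delta (h : Good K V) : Module.rank kk (LinearMap.ker (deltaMap h)) = 1 := by
  let g : kk →ₗ[kk] Pot h :=
    { toFun := fun c => ⟨(fun _ => c, 0), by intro κ v; simp⟩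
      map_add' := fun p q => by ext <;> simp
      map_smul' := fun c p => by ext <;> simp }
  obtain ⟨v0, hv0⟩ := h.ne
  have hg : Function.Injective g := by
    intro p q hpq
    exact congrArg (fun x : Pot h => x.1.1 ⟨v0, hv0⟩) hpq
  have hr : LinearMap.range g = LinearMap.ker (deltaMap h) := by
    ext x
    constructor
    · rintro ⟨c, rfl⟩
      rw [LinearMap.mem_ker]
      ext e
      exact sub_self c
    · intro hx
      rw [LinearMap.mem_ker] at hx
      have hc := fun u w => const_of_delta h x.1.1 (fun e => sub_eq_zero.1 (congrFun hx e)) _ u w le_rfl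
      refine ⟨x.1.1 ⟨v0, hv0⟩, ?_⟩
      apply Subtype.ext
      refine Prod.ext ?_ ?_
      · ext v
        exact hc _ _
      · ext κ
        have := x.2 κ ⟨v0, hv0⟩
        rw [hc _ ⟨v0, hv0⟩] at this
        exact (left_eq_add.1 this).symm
  rw [← hr, ← (LinearEquiv.ofInjective g hg).rank_eq, Module.rank_self]

lemma range_delta (h : Good K V) : LinearMap.range (deltaMap h) = Inv K (EV V) := by
  classical
  ext c
  constructor
  · rintro ⟨x, rfl⟩ ⟨a, ha⟩ ⟨b, hb⟩ hab
    obtain ⟨k, hk, hk2⟩ := orb_eq.1 hab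
    simp only at hk2
    subst hk2
    have e1 := x.2 ⟨k, hk⟩ ⟨a.tgt, ha.2⟩
    have e2 := x.2 ⟨k, hk⟩ ⟨a.src, ha.1⟩
    change x.1.1 _ - x.1.1 _ = x.1.1 _ - x.1.1 _
    have e3 : ∀ hh, x.1.1 ⟨(k • a).tgt, hh⟩ = x.1.1 ⟨k * a.tgt, h.inv k hk _ ha.2⟩ := by
      intro hh; exact congrArg x.1.1 (Subtype.ext (smul_tgt k a))
    rw [e3]
    change _ = _ - x.1.1 ⟨k * a.src, h.inv k hk _ ha.1⟩
    simp only at e1 e2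
    rw [e1, e2]
    abel
  · intro hc
    let c' : Edge n → kk := fun e => if he : e ∈ EV V then c ⟨e, he⟩ else 0
    have hc' : ∀ k ∈ K, ∀ e, c' (k • e) = c' e := by
      intro k hk e
      by_cases he : e ∈ EV V
      · have he' : k • e ∈ EV V := (h.ev_smul hk e).2 he
        simp only [c', he, he', dif_pos]
        exact hc _ _ (orb_eq.2 ⟨k, hk, rfl⟩).symm
      · have he' : k • e ∉ EV V := fun hh => he ((h.ev_smul hk e).1 hh)
        simp only [c', he, he', dif_neg, not_false_eq_true]
    obtain ⟨p, hp⟩ := exists_potential c'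
    obtain ⟨v0, hv0⟩ := h.ne
    refine ⟨⟨(fun v => p v, fun κ => p ((κ : Fr n) * v0) - p v0), ?_⟩, ?_⟩
    · intro κ v
      change p (κ * v) = p v + (p (κ * v0) - p v0)
      have := potential_unique (fun u => p ((κ : Fr n) * u)) p (by
        intro e
        change p (κ * e.tgt) - p (κ * e.src) = _
        rw [← smul_tgt, ← smul_src, hp, hp, hc' κ κ.2]; abel) v0 v
      have h2 : p (κ * v) = (p (κ * v) - p (κ * v0)) + p (κ * v0) := by abel
      rw [h2, this]; abel
    · ext e
      change p e.1.tgt - p e.1.src = c e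
      rw [hp]
      have : c' e.1 = c e := by simp [c', e.2]
      rw [this]; abel

theorem Good.rk_formula (h : Good K V) :
    rk K + (cnt K V : Cardinal) = (cnt K (EV V) : Cardinal) + 1 := by
  have e1 := LinearMap.rank_range_add_rank_ker (rhoMap h)
  have e2 := LinearMap.rank_range_add_rank_ker (deltaMap h)
  rw [range_rho, rank_ker_rho] at e1
  rw [range_delta, rank_ker_delta, rank_Inv _ _ h.fin_EV, ← e1] at e2
  have hlt : Module.rank kk (Hm K) < Cardinal.aleph0 := by
    refine lt_of_le_of_lt (self_le_add_right _ (cnt K V : Cardinal)) ?_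
    rw [← e2]
    exact_mod_cast Cardinal.natCast_lt_aleph0 (n := cnt K (EV V) + 1)
  rw [rk_eq_rank K hlt, ← e2]

theorem Good.rk_eq (h : Good K V) (hV : V.Infinite) : rk K = (cnt K (Ess V) + 1 : ℕ) := by
  have e := h.rk_formula
  rw [h.cnt_ev hV] at e
  have e' : (cnt K V : Cardinal) + rk K = (cnt K V : Cardinal) + (cnt K (Ess V) + 1 : ℕ) := by
    rw [add_comm, e]; push_cast; rw [add_assoc]
  exact Cardinal.eq_of_add_eq_add_left e' Cardinal.natCast_lt_aleph0
end rankformula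
end Ech

namespace Ech
/-! ### Invariant subtrees -/
variable {n : ℕ}

lemma ev_mono {V W : Set (Fr n)} (h : V ⊆ W) : EV V ⊆ EV W := fun _ he => ⟨h he.1, h he.2⟩

lemma ess_mono {V W : Set (Fr n)} (h : V ⊆ W) : Ess V ⊆ Ess W := fun _ he =>
  ⟨ev_mono h he.1, he.2.1.mono (cl_mono h le_rfl), he.2.2.mono (cl_mono h le_rfl)⟩

lemma sep_ev_closure {S : Set (Fr n)} {V : Set (Fr n)}
    (hinv : ∀ k ∈ Subgroup.closure S, ∀ v ∈ V, k * v ∈ V)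
    (hS : ∀ s ∈ S, Sep 1 s ⊆ EV V) : ∀ g ∈ Subgroup.closure S, Sep 1 g ⊆ EV V := by
  have hsm : ∀ k ∈ Subgroup.closure S, ∀ u v, Sep u v ⊆ EV V → Sep (k * u) (k * v) ⊆ EV V := by
    intro k hk u v h e he
    rw [mem_sep_smul'] at he
    have h1 := h he
    have e1 := hinv k hk _ h1.1
    have e2 := hinv k hk _ h1.2
    rw [smul_src, mul_inv_cancel_left] at e1
    rw [smul_tgt, mul_inv_cancel_left] at e2
    exact ⟨e1, e2⟩
  intro g hg
  induction hg using Subgroup.closure_induction with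
  | mem x hx => exact hS x hx
  | one => simp
  | mul x y hx hy ihx ihy =>
    intro e he
    rcases sep_tri (v := x) he with h1 | h1
    · exact ihx h1
    · have := hsm x hx 1 y ihy
      rw [mul_one] at this
      exact this h1
  | inv x hx ih =>
    have := hsm x⁻¹ (Subgroup.inv_mem _ hx) 1 x ih
    rw [mul_one, inv_mul_cancel, sep_comm] at this
    exact this

lemma exists_star (w : Fr n) : ∃ B : Set (Fr n), B.Finite ∧ 1 ∈ B ∧ w ∈ B ∧
    ∀ b ∈ B, Sep 1 b ⊆ EV B := by
  refine walk_ind (P := fun w => ∃ B : Set (Fr n), B.Finite ∧ 1 ∈ B ∧ w ∈ B ∧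
    ∀ b ∈ B, Sep 1 b ⊆ EV B) 1 ⟨{1}, by simp, rfl, rfl, by simp⟩ ?_ w
  rintro e a b hj ⟨B, hB, h1, ha, hst⟩
  have hsub : B ⊆ insert b B := Set.subset_insert _ _
  refine ⟨insert b B, hB.insert b, hsub h1, Set.mem_insert _ _, ?_⟩
  rintro c (rfl | hc)
  · intro f hf
    rcases sep_tri (v := a) hf with h2 | h2
    · exact ev_mono hsub (hst a ha h2)
    · rw [sep_jn hj] at h2
      rw [Set.mem_singleton_iff.1 h2, jn_ev hj]
      exact ⟨hsub ha, Set.mem_insert _ _⟩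
  · exact (hst c hc).trans (ev_mono hsub)

lemma exists_hull (G : Subgroup (Fr n)) (hG : G.FG) : ∃ V, Good G V ∧ 1 ∈ V := by
  obtain ⟨S, hS⟩ := hG
  choose B hB h1 hw hst using exists_star (n := n)
  let BB : Set (Fr n) := B 1 ∪ ⋃ s ∈ S, B s
  have hBB : BB.Finite := (hB 1).union (S.finite_toSet.biUnion (fun s _ => hB s))
  have hBst : ∀ b ∈ BB, Sep 1 b ⊆ EV BB := by
    rintro b (hb | hb)
    · exact (hst 1 b hb).trans (ev_mono Set.subset_union_left)
    · simp only [Set.mem_iUnion] at hb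
      obtain ⟨s, hs, hb⟩ := hb
      refine (hst s b hb).trans (ev_mono ?_)
      intro x hx
      refine Or.inr ?_
      simp only [Set.mem_iUnion]
      exact ⟨s, hs, hx⟩
  let V : Set (Fr n) := {v | ∃ g ∈ G, ∃ b ∈ BB, v = g * b}
  have hBV : BB ⊆ V := fun b hb => ⟨1, G.one_mem, b, hb, by simp⟩
  have hinv : ∀ k ∈ G, ∀ v ∈ V, k * v ∈ V := by
    rintro k hk v ⟨g, hg, b, hb, rfl⟩
    exact ⟨k * g, G.mul_mem hk hg, b, hb, by rw [mul_assoc]⟩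
  have hcl := sep_ev_closure (S := (S : Set (Fr n))) (V := V) (by rw [hS]; exact hinv) (by
    intro s hs
    refine (hst s s (hw s)).trans (ev_mono ?_)
    intro x hx
    refine hBV (Or.inr ?_)
    simp only [Set.mem_iUnion]
    exact ⟨s, hs, hx⟩)
  rw [hS] at hcl
  have hV : ∀ v ∈ V, Sep 1 v ⊆ EV V := by
    rintro v ⟨g, hg, b, hb, rfl⟩ e he
    rcases sep_tri (v := g) he with h2 | h2
    · exact hcl g hg h2
    · have h3 : e ∈ Sep (g * 1) (g * b) := by rwa [mul_one]
      rw [mem_sep_smul'] at h3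
      have h4 := hBst b hb h3
      have e1 := hinv g hg _ (hBV h4.1)
      have e2 := hinv g hg _ (hBV h4.2)
      rw [smul_src, mul_inv_cancel_left] at e1
      rw [smul_tgt, mul_inv_cancel_left] at e2
      exact ⟨e1, e2⟩
  have h1V : (1 : Fr n) ∈ V := hBV (Or.inl (h1 1))
  refine ⟨V, ⟨⟨1, h1V⟩, ?_, hinv, BB, hBB, fun v hv => hv⟩, h1V⟩
  intro u hu v hv e he
  rcases sep_tri (v := 1) he with h2 | h2
  · rw [sep_comm] at h2; exact hV u hu h2
  · exact hV v hv h2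

lemma Good.inter {H G : Subgroup (Fr n)} {V W : Set (Fr n)} (hV : Good H V) (hW : Good G W)
    (hne : (V ∩ W).Nonempty) : Good (H ⊓ G) (V ∩ W) := by
  classical
  refine ⟨hne, ?_, ?_, ?_⟩
  · intro u hu v hv e he
    have h1 := hV.cvx u hu.1 v hv.1 e he
    have h2 := hW.cvx u hu.2 v hv.2 e he
    exact ⟨⟨h1.1, h2.1⟩, ⟨h1.2, h2.2⟩⟩
  · intro k hk v hv
    exact ⟨hV.inv k hk.1 v hv.1, hW.inv k hk.2 v hv.2⟩
  · obtain ⟨B, hB, hBV⟩ := hV.fin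
    obtain ⟨C, hC, hCW⟩ := hW.fin
    have key : ∀ x : Fr n × Fr n, ∃ v0 : Fr n, (∃ h ∈ H, ∃ g ∈ G, h * x.1 = g * x.2) →
        (∃ h ∈ H, ∃ g ∈ G, h * x.1 = v0 ∧ g * x.2 = v0) := by
      intro x
      by_cases hx : ∃ h ∈ H, ∃ g ∈ G, h * x.1 = g * x.2
      · obtain ⟨h, hh, g, hg, e⟩ := hx
        exact ⟨h * x.1, fun _ => ⟨h, hh, g, hg, rfl, e.symm⟩⟩
      · exact ⟨1, fun h => absurd h hx⟩
    choose F hF using key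
    refine ⟨F '' (B ×ˢ C), (hB.prod hC).image F, ?_⟩
    rintro v ⟨hv, hw⟩
    obtain ⟨h, hh, b, hb, e1⟩ := hBV v hv
    obtain ⟨g, hg, c, hc, e2⟩ := hCW v hw
    obtain ⟨h', hh', g', hg', e3, e4⟩ := hF (b, c) ⟨h, hh, g, hg, by rw [← e1, ← e2]⟩
    simp only at e3 e4
    have e5 : h * h'⁻¹ = g * g'⁻¹ := by
      have a1 : v = (h * h'⁻¹) * F (b, c) := by rw [← e3, e1]; group
      have a2 : v = (g * g'⁻¹) * F (b, c) := by rw [← e4, e2]; group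
      exact mul_right_cancel (a1.symm.trans a2)
    refine ⟨h * h'⁻¹, ⟨H.mul_mem hh (H.inv_mem hh'), ?_⟩, F (b, c), ⟨(b, c), ⟨hb, hc⟩, rfl⟩, ?_⟩
    · rw [e5]; exact G.mul_mem hg (G.inv_mem hg')
    · rw [← e3, e1]; group

lemma Good.infinite {K : Subgroup (Fr n)} {V : Set (Fr n)} (h : Good K V) (hK : K ≠ ⊥) :
    V.Infinite := by
  obtain ⟨⟨k, hk⟩, ha⟩ := Subgroup.ne_bot_iff_exists_ne_one.1 hK
  have hk1 : k ≠ 1 := fun h => ha (Subtype.ext h)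
  obtain ⟨v, hv⟩ := h.ne
  have hinj : Function.Injective (fun i : ℕ => k ^ i * v) := by
    intro i j hij
    have := mul_right_cancel hij
    exact injective_pow_iff_not_isOfFinOrder.2 (by
      rw [isOfFinOrder_iff_pow_eq_one]
      rintro ⟨m, hm, hm1⟩
      exact hk1 ((pow_eq_one_iff_left hm.ne').1 hm1)) this
  exact Set.infinite_of_injective_forall_mem hinj
    (fun i => h.inv _ (K.pow_mem hk i) v hv)

lemma rk_bot : rk (⊥ : Subgroup (Fr n)) = 0 := by
  have := rk_le (Subgroup.closure_empty (G := Fr n))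
  simpa using this

lemma smul_edge_inj {g h : Fr n} {e : Edge n} (he : g • e = h • e) : g = h := by
  have := congrArg Edge.src he
  exact mul_right_cancel this

theorem main_ineq {H G : Subgroup (Fr n)} {V W : Set (Fr n)} (hV : Good H V) (hW : Good G W)
    (hne : (V ∩ W).Nonempty)
    (hstar : ∀ e ∈ Ess V, ∀ e' ∈ Ess V, e.lab = e'.lab → ∃ h ∈ H, h • e = e') :
    rk (H ⊓ G) ≤ rk G := by
  by_cases hK : H ⊓ G = ⊥
  · rw [hK, rk_bot]; exact bot_le
  have hgood := hV.inter hW hne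
  have hinf := hgood.infinite hK
  rw [hgood.rk_eq hinf, hW.rk_eq (hinf.mono Set.inter_subset_right)]
  have : cnt (H ⊓ G) (Ess (V ∩ W)) ≤ cnt G (Ess W) := by
    refine cnt_le Eq hW.fin_Ess (fun e he => ⟨e, ess_mono Set.inter_subset_right he, rfl⟩) ?_
    rintro a ha a' ha' _ - _ - rfl rfl heq
    obtain ⟨g, hg, hga⟩ := orb_eq.1 heq
    obtain ⟨h, hh, hha⟩ := hstar a (ess_mono Set.inter_subset_left ha) a'
      (ess_mono Set.inter_subset_left ha') (by rw [← hga]; rfl)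
    have : h = g := smul_edge_inj (hha.trans hga.symm)
    subst this
    exact orb_eq.2 ⟨h, ⟨hh, hg⟩, hga⟩
  exact_mod_cast Nat.succ_le_succ this

/-! ### The standard filtration -/

/-- the standard stages -/
def Fl (n i : ℕ) : Subgroup (Fr n) := stage (FreeGroup.of : Fin n → Fr n) i

lemma of_mem_Fl {i : ℕ} {j : Fin n} (h : (j : ℕ) < i) : (FreeGroup.of j : Fr n) ∈ Fl n i :=
  Subgroup.subset_closure ⟨j, h, rfl⟩

lemma lt_of_of_mem_Fl {i : ℕ} {j : Fin n} (h : (FreeGroup.of j : Fr n) ∈ Fl n i) : (j : ℕ) < i := by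
  classical
  by_contra hc
  let φ : Fr n →* Multiplicative ℤ :=
    FreeGroup.lift (fun k => if (k : ℕ) < i then 1 else Multiplicative.ofAdd 1)
  have hle : Fl n i ≤ φ.ker := by
    rw [Fl, stage, Subgroup.closure_le]
    rintro _ ⟨k, hk, rfl⟩
    have hk' : (k : ℕ) < i := hk
    simp [φ, MonoidHom.mem_ker, hk']
  have h1 : φ (FreeGroup.of j) = 1 := hle h
  simp only [φ, FreeGroup.lift_apply_of, hc, if_false] at h1
  exact absurd h1 (by decide)

lemma ev_Fl_lab {i : ℕ} {e : Edge n} (he : e ∈ EV (Fl n i : Set (Fr n))) : (e.lab : ℕ) < i := by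
  apply lt_of_of_mem_Fl
  have := (Fl n i).mul_mem ((Fl n i).inv_mem he.1) he.2
  simpa [Edge.tgt] using this

lemma good_Fl (i : ℕ) : Good (Fl n i) (Fl n i : Set (Fr n)) := by
  have hcl : ∀ g ∈ Fl n i, Sep 1 g ⊆ EV (Fl n i : Set (Fr n)) := by
    refine sep_ev_closure (fun k hk v hv => (Fl n i).mul_mem hk hv) ?_
    rintro _ ⟨j, hj, rfl⟩
    have hjn : Jn (⟨1, j⟩ : Edge n) 1 (FreeGroup.of j) := Or.inl ⟨rfl, by simp [Edge.tgt]⟩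
    rw [sep_jn hjn, Set.singleton_subset_iff, jn_ev hjn]
    exact ⟨(Fl n i).one_mem, of_mem_Fl hj⟩
  refine ⟨⟨1, (Fl n i).one_mem⟩, ?_, fun k hk v hv => (Fl n i).mul_mem hk hv, {1}, by simp,
    fun v hv => ⟨v, hv, 1, rfl, by simp⟩⟩
  intro u hu v hv e he
  rcases sep_tri (v := 1) he with h2 | h2
  · rw [sep_comm] at h2; exact hcl u hu h2
  · exact hcl v hv h2

lemma jn_Fl {i : ℕ} {e : Edge n} {u v : Fr n} (hj : Jn e u v) (he : (e.lab : ℕ) < i) :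
    u⁻¹ * v ∈ Fl n i := by
  rcases hj with ⟨rfl, rfl⟩ | ⟨rfl, rfl⟩
  · simpa [Edge.tgt] using of_mem_Fl he
  · simpa [Edge.tgt] using of_mem_Fl he

lemma mem_Fl_of_sep {i : ℕ} {w : Fr n} : ∀ N u, (Sep u w).ncard ≤ N →
    (∀ e ∈ Sep u w, (e.lab : ℕ) < i) → u⁻¹ * w ∈ Fl n i := by
  intro N
  induction N with
  | zero =>
    intro u hN _
    by_cases huw : w = u
    · rw [huw]; simpa using (Fl n i).one_mem
    · obtain ⟨e, u', -, he2, -⟩ := exists_step huw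
      rw [Nat.le_zero, Set.ncard_eq_zero (sep_finite _ _)] at hN
      rw [hN] at he2; exact absurd he2 (by simp)
  | succ N ih =>
    intro u hN hl
    by_cases huw : w = u
    · rw [huw]; simpa using (Fl n i).one_mem
    · obtain ⟨e, u', he1, he2, he3⟩ := exists_step huw
      have h1 := ih u' (by have := step_ncard he2 he3; omega)
        (fun f hf => hl f (by rw [he3] at hf; exact hf.1))
      have h2 := jn_Fl he1 (hl e he2)
      have := (Fl n i).mul_mem h2 h1
      simpa [mul_assoc] using this

lemma Fl_mono {i j : ℕ} (h : i ≤ j) : Fl n i ≤ Fl n j :=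
  Subgroup.closure_mono (Set.image_mono fun _ hk => lt_of_lt_of_le hk h)

lemma Fl_top : Fl n n = ⊤ := by
  rw [Fl, stage, ← FreeGroup.closure_range_of (Fin n), ← Set.image_univ]
  congr 2
  ext j
  simp [j.2]

lemma Fl_zero : Fl n 0 = ⊥ := by
  simp [Fl, stage]

section claim
variable {H : Subgroup (Fr n)} {V : Set (Fr n)}

/-- the level-`i` part of `V` -/
def Lv (V : Set (Fr n)) (i : ℕ) : Set (Fr n) := V ∩ (Fl n i : Set (Fr n))

lemma good_Lv (hV : Good H V) (h1 : 1 ∈ V) (i : ℕ) : Good (H ⊓ Fl n i) (Lv V i) :=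
  hV.inter (good_Fl i) ⟨1, h1, (Fl n i).one_mem⟩

lemma lab_Lv {i : ℕ} {e : Edge n} (he : e ∈ EV (Lv V i)) : (e.lab : ℕ) < i :=
  ev_Fl_lab (ev_mono Set.inter_subset_right he)

lemma Lv_mono {i j : ℕ} (h : i ≤ j) : Lv V i ⊆ Lv V j :=
  Set.inter_subset_inter_right _ (Fl_mono h)

lemma ess_empty_of_rk (hV : Good H V) (hr : rk H ≤ 1) : Ess V = ∅ := by
  by_cases hinf : V.Infinite
  · rw [hV.rk_eq hinf] at hr
    have h1 : cnt H (Ess V) + 1 ≤ 1 := by exact_mod_cast hr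
    have h2 : (orb H '' Ess V).ncard = 0 := by unfold cnt at h1; omega
    rw [Set.ncard_eq_zero hV.fin_Ess] at h2
    exact Set.image_eq_empty.1 h2
  · rw [Set.not_infinite] at hinf
    ext e
    simp only [Set.mem_empty_iff_false, iff_false]
    intro he
    exact he.2.1 (hinf.subset fun _ hw => hw.1)

lemma ne_bot_of_ess (hV : Good H V) (h1 : 1 ∈ V) {i : ℕ}
    (hech : rk (H ⊓ Fl n (i + 1)) ≤ rk (H ⊓ Fl n i) + 1) {e : Edge n}
    (he : e ∈ Ess (Lv V (i + 1))) : H ⊓ Fl n i ≠ ⊥ := by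
  intro hb
  rw [hb, rk_bot, zero_add] at hech
  rw [ess_empty_of_rk (good_Lv hV h1 (i + 1)) hech] at he
  exact he

/-- at most one orbit of essential edges is new -/
lemma new_orbit (hV : Good H V) (h1 : 1 ∈ V) {i : ℕ}
    (hech : rk (H ⊓ Fl n (i + 1)) ≤ rk (H ⊓ Fl n i) + 1) {e e' : Edge n}
    (he : e ∈ Ess (Lv V (i + 1))) (he' : e' ∈ Ess (Lv V (i + 1)))
    (hne : ∀ f ∈ Ess (Lv V i), orb (H ⊓ Fl n (i + 1)) f ≠ orb (H ⊓ Fl n (i + 1)) e)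
    (hne' : ∀ f ∈ Ess (Lv V i), orb (H ⊓ Fl n (i + 1)) f ≠ orb (H ⊓ Fl n (i + 1)) e') :
    orb (H ⊓ Fl n (i + 1)) e = orb (H ⊓ Fl n (i + 1)) e' := by
  have hb := ne_bot_of_ess hV h1 hech he
  have g0 := good_Lv hV h1 i
  have g1 := good_Lv hV h1 (i + 1)
  have hinf := g0.infinite hb
  have hsub : Lv V i ⊆ Lv V (i + 1) := Lv_mono (Nat.le_succ i)
  rw [g0.rk_eq hinf, g1.rk_eq (hinf.mono hsub)] at hech
  have hc : cnt (H ⊓ Fl n (i + 1)) (Ess (Lv V (i + 1))) ≤ cnt (H ⊓ Fl n i) (Ess (Lv V i)) + 1 := by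
    have : cnt (H ⊓ Fl n (i + 1)) (Ess (Lv V (i + 1))) + 1
        ≤ cnt (H ⊓ Fl n i) (Ess (Lv V i)) + 1 + 1 := by exact_mod_cast hech
    omega
  have hE : Ess (Lv V i) ⊆ Ess (Lv V (i + 1)) := ess_mono hsub
  have hc2 : cnt (H ⊓ Fl n i) (Ess (Lv V i)) ≤ cnt (H ⊓ Fl n (i + 1)) (Ess (Lv V i)) := by
    refine cnt_le Eq (g1.fin_Ess.subset (Set.image_mono hE)) (fun e he => ⟨e, he, rfl⟩) ?_
    rintro a ha a' ha' _ - _ - rfl rfl heq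
    obtain ⟨g, hg, hga⟩ := orb_eq.1 heq
    refine orb_eq.2 ⟨g, ⟨hg.1, ?_⟩, hga⟩
    have hs : g * a.src = a'.src := congrArg Edge.src hga
    have : g = a'.src * a.src⁻¹ := by rw [← hs]; group
    rw [this]
    exact (Fl n i).mul_mem ha'.1.1.2 ((Fl n i).inv_mem ha.1.1.2)
  by_contra hcon
  set O := orb (H ⊓ Fl n (i + 1)) '' Ess (Lv V i) with hO
  have hOfin : O.Finite := g1.fin_Ess.subset (Set.image_mono hE)
  have n1 : orb (H ⊓ Fl n (i + 1)) e' ∉ O := by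
    rintro ⟨f, hf, hfe⟩; exact hne' f hf hfe
  have n2 : orb (H ⊓ Fl n (i + 1)) e ∉ insert (orb (H ⊓ Fl n (i + 1)) e') O := by
    rintro (h | ⟨f, hf, hfe⟩)
    · exact hcon h
    · exact hne f hf hfe
  have hle : (insert (orb (H ⊓ Fl n (i + 1)) e) (insert (orb (H ⊓ Fl n (i + 1)) e') O)).ncard
      ≤ (orb (H ⊓ Fl n (i + 1)) '' Ess (Lv V (i + 1))).ncard := by
    refine Set.ncard_le_ncard ?_ g1.fin_Ess
    rintro x (rfl | rfl | hx)
    · exact ⟨e, he, rfl⟩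
    · exact ⟨e', he', rfl⟩
    · exact Set.image_mono hE hx
  rw [Set.ncard_insert_of_notMem n2 (hOfin.insert _), Set.ncard_insert_of_notMem n1 hOfin] at hle
  unfold cnt at hc hc2
  rw [← hO] at hc2
  omega

lemma new_of_lab {i : ℕ} {e : Edge n} (K : Subgroup (Fr n)) (he : i ≤ (e.lab : ℕ)) :
    ∀ f ∈ Ess (Lv V i), orb K f ≠ orb K e := by
  intro f hf heq
  obtain ⟨k, -, rfl⟩ := orb_eq.1 heq
  have := lab_Lv hf.1
  rw [smul_lab] at he
  omega

/-- an essential edge of level `i+1` inside `F_i` is essential of level `i` -/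
lemma ess_down (hV : Good H V) (h1 : 1 ∈ V) {i : ℕ} {e : Edge n}
    (he : e ∈ Ess (Lv V (i + 1))) (hl : (e.lab : ℕ) < i) (hs : e.src ∈ Fl n i) :
    e ∈ Ess (Lv V i) := by
  have ht : e.tgt ∈ Fl n i := (Fl n i).mul_mem hs (of_mem_Fl hl)
  have key : ∀ u ∈ Fl n i, Cl (Lv V (i + 1)) e u ⊆ Cl (Lv V i) e u := by
    intro u hu w hw
    refine ⟨⟨hw.1.1, ?_⟩, hw.2⟩
    have := mem_Fl_of_sep (i := i) (w := w) _ u le_rfl (fun f hf => by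
      have := lab_le_of_lt (hw.2 f hf)
      have h2 : (f.lab : ℕ) ≤ e.lab := this
      omega)
    have h2 := (Fl n i).mul_mem hu this
    simpa using h2
  exact ⟨⟨⟨he.1.1.1, hs⟩, ⟨he.1.2.1, ht⟩⟩, he.2.1.mono (key _ hs), he.2.2.mono (key _ ht)⟩

lemma exists_top_edge (hV : Good H V) (h1 : 1 ∈ V) {i : ℕ}
    (hinf : (Lv V i).Infinite) {e : Edge n}
    (he : e ∈ Ess (Lv V (i + 1))) (hl : (e.lab : ℕ) < i) (hs : e.src ∉ Fl n i) :
    ∃ e0 ∈ Ess (Lv V (i + 1)), (e0.lab : ℕ) = i := by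
  have g1 := good_Lv hV h1 (i + 1)
  have h1L : (1 : Fr n) ∈ Lv V (i + 1) := ⟨h1, (Fl n _).one_mem⟩
  have hex : ∃ f ∈ Sep 1 e.src, i ≤ (f.lab : ℕ) := by
    by_contra hc
    push Not at hc
    have := mem_Fl_of_sep (i := i) (w := e.src) _ 1 le_rfl hc
    exact hs (by simpa using this)
  obtain ⟨f, hf, hfl⟩ := hex
  obtain ⟨m, hm, hmax⟩ := (sep_finite 1 e.src).exists_maximalFor id _ ⟨f, hf⟩
  have hle : ∀ g ∈ Sep 1 e.src, g ≤ m := fun g hg => by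
    rcases le_total g m with h | h
    · exact h
    · exact hmax hg h
  have hmEV : m ∈ EV (Lv V (i + 1)) := g1.cvx 1 h1L e.src he.1.1 m hm
  have hml : (m.lab : ℕ) = i := by
    have h2 := lab_Lv hmEV
    have h3 : (f.lab : ℕ) ≤ m.lab := by
      rcases (hle f hf).lt_or_eq with h | h
      · exact lab_le_of_lt h
      · rw [h]
    omega
  refine ⟨m, ?_, hml⟩
  obtain ⟨a, b, hj, ha, hb⟩ := sep_sub hm
  obtain ⟨haV, hbV⟩ := (jn_ev hj).1 hmEV
  rw [jn_ess hj]
  refine ⟨haV, hbV, ?_, ?_⟩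
  · rw [cl_congr (u := 1) (fun f hf => lt_of_le_of_ne (hle f (ha hf).1) (ha hf).2)]
    refine hinf.mono ?_
    intro w hw
    refine ⟨Lv_mono (Nat.le_succ i) hw, fun f hf => ?_⟩
    have g0 := good_Lv hV h1 i
    have := lab_Lv (g0.cvx 1 ⟨h1, (Fl n _).one_mem⟩ w hw f hf)
    apply lt_of_lab_lt
    rw [Fin.lt_def]; omega
  · rw [← cl_congr (w := e.src) (fun f hf => lt_of_le_of_ne (hle f (hb hf).1) (hb hf).2)]
    refine he.2.1.mono (cl_mono subset_rfl (lt_of_lab_lt ?_).le)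
    rw [Fin.lt_def]; omega

lemma claim_A (hV : Good H V) (h1 : 1 ∈ V)
    (hech : ∀ i < n, rk (H ⊓ Fl n (i + 1)) ≤ rk (H ⊓ Fl n i) + 1) :
    ∀ d i, i + d = n → ∀ e ∈ Ess V, (e.lab : ℕ) < i → ∃ h ∈ H, h • e ∈ Ess (Lv V i) := by
  intro d
  induction d with
  | zero =>
    intro i hi e he _
    rw [add_zero] at hi
    subst hi
    refine ⟨1, H.one_mem, ?_⟩
    have : Lv V i = V := by simp [Lv, Fl_top]
    rw [this, one_smul]; exact he
  | succ d ih =>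
    intro i hi e he hl
    obtain ⟨h, hh, hf⟩ := ih (i + 1) (by omega) e he (by omega)
    have hech' := hech i (by omega)
    by_cases hex : ∃ f ∈ Ess (Lv V i), orb (H ⊓ Fl n (i + 1)) f = orb (H ⊓ Fl n (i + 1)) (h • e)
    · obtain ⟨f, hfE, hfo⟩ := hex
      obtain ⟨k, hk, hke⟩ := orb_eq.1 hfo
      refine ⟨k⁻¹ * h, H.mul_mem (H.inv_mem hk.1) hh, ?_⟩
      rw [mul_smul, ← hke, inv_smul_smul]; exact hfE
    · exfalso
      push Not at hex
      have hs : (h • e).src ∉ Fl n i := by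
        intro hs
        exact hex _ (ess_down hV h1 hf hl hs) rfl
      have hinf := (good_Lv hV h1 i).infinite (ne_bot_of_ess hV h1 hech' hf)
      obtain ⟨e0, he0, hl0⟩ := exists_top_edge hV h1 hinf hf hl hs
      have := new_orbit hV h1 hech' hf he0 hex (new_of_lab _ hl0.ge)
      obtain ⟨k, -, hk⟩ := orb_eq.1 this
      rw [← hk] at hl0
      simp only [smul_lab] at hl0
      omega

lemma claim_star (hV : Good H V) (h1 : 1 ∈ V)
    (hech : ∀ i < n, rk (H ⊓ Fl n (i + 1)) ≤ rk (H ⊓ Fl n i) + 1) :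
    ∀ e ∈ Ess V, ∀ e' ∈ Ess V, e.lab = e'.lab → ∃ h ∈ H, h • e = e' := by
  intro e he e' he' hl
  have hlt := e.lab.2
  obtain ⟨h, hh, hf⟩ := claim_A hV h1 hech (n - (e.lab + 1)) (e.lab + 1) (by omega) e he (by omega)
  obtain ⟨h', hh', hf'⟩ := claim_A hV h1 hech (n - (e.lab + 1)) (e.lab + 1) (by omega) e' he'
    (by rw [← hl]; omega)
  have := new_orbit hV h1 (hech _ hlt) hf hf' (new_of_lab _ le_rfl)
    (new_of_lab _ (by rw [smul_lab, ← hl]))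
  obtain ⟨k, hk, hke⟩ := orb_eq.1 this
  refine ⟨h'⁻¹ * k * h, H.mul_mem (H.mul_mem (H.inv_mem hh') hk.1) hh, ?_⟩
  rw [mul_smul, mul_smul, hke, inv_smul_smul]

lemma fg_of_echelon (hech : ∀ i < n, rk (H ⊓ Fl n (i + 1)) ≤ rk (H ⊓ Fl n i) + 1) : H.FG := by
  have key : ∀ i ≤ n, rk (H ⊓ Fl n i) ≤ (i : Cardinal) := by
    intro i
    induction i with
    | zero => intro _; rw [Fl_zero, inf_bot_eq, rk_bot]; simp
    | succ i ih =>
      intro hi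
      refine (hech i (by omega)).trans ?_
      push_cast
      gcongr
      exact ih (by omega)
  have hn := key n le_rfl
  rw [Fl_top, inf_top_eq] at hn
  obtain ⟨S, hS, hrk⟩ := exists_rk H
  rw [← hrk] at hn
  have hfin : S.Finite := Cardinal.lt_aleph0_iff_set_finite.1
    (hn.trans_lt Cardinal.natCast_lt_aleph0)
  exact (Subgroup.fg_iff H).2 ⟨S, hS, hfin⟩

theorem std_inert (hech : ∀ i < n, rk (H ⊓ Fl n (i + 1)) ≤ rk (H ⊓ Fl n i) + 1) : IsInert H := by
  intro G hG
  obtain ⟨V, hV, hV1⟩ := exists_hull H (fg_of_echelon hech)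
  obtain ⟨W, hW, hW1⟩ := exists_hull G hG
  exact main_ineq hV hW ⟨1, hV1, hW1⟩ (claim_star hV hV1 hech)
end claim

/-! ### Change of basis -/

lemma rk_map_le {A B : Type} [Group A] [Group B] (f : A →* B) (K : Subgroup A) :
    rk (K.map f) ≤ rk K := by
  obtain ⟨S, hS, hrk⟩ := exists_rk K
  rw [← hrk]
  refine (rk_le (S := f '' S) ?_).trans Cardinal.mk_image_le
  rw [← MonoidHom.map_closure, hS]

lemma rk_map_equiv {A B : Type} [Group A] [Group B] (f : A ≃* B) (K : Subgroup A) :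
    rk (K.map f.toMonoidHom) = rk K := by
  apply le_antisymm (rk_map_le _ _)
  have := rk_map_le f.symm.toMonoidHom (K.map f.toMonoidHom)
  rw [Subgroup.map_map] at this
  have h2 : f.symm.toMonoidHom.comp f.toMonoidHom = MonoidHom.id A := by ext; simp
  rwa [h2, Subgroup.map_id] at this

theorem echelon_inert (H : Subgroup (Fr n)) (hH : IsEchelon H) : IsInert H := by
  obtain ⟨x, hx, hech⟩ := hH
  let f : Fr n ≃* Fr n := MulEquiv.ofBijective (FreeGroup.lift x) hx
  have hf : ∀ j, f (FreeGroup.of j) = x j := fun j => by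
    change FreeGroup.lift x (FreeGroup.of j) = x j
    simp
  have hst : ∀ i, stage x i = (Fl n i).map f.toMonoidHom := by
    intro i
    rw [Fl, stage, stage, MonoidHom.map_closure, ← Set.image_comp]
    congr 2
    ext j
    exact (hf j).symm
  have hmc : ∀ K : Subgroup (Fr n), (K.comap f.toMonoidHom).map f.toMonoidHom = K := fun K =>
    Subgroup.map_comap_eq_self_of_surjective f.surjective K
  have hinf : ∀ A B : Subgroup (Fr n), rk (A.comap f.toMonoidHom ⊓ B)
      = rk (A ⊓ B.map f.toMonoidHom) := by
    intro A B
    rw [← rk_map_equiv f, Subgroup.map_inf _ _ f.toMonoidHom f.injective, hmc]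
  have key : IsInert (H.comap f.toMonoidHom) := by
    apply std_inert
    intro i hi
    rw [hinf, hinf, ← hst, ← hst]
    exact hech i hi
  intro G hG
  have hG' : (G.comap f.toMonoidHom).FG := by
    have : G.comap f.toMonoidHom = G.map f.symm.toMonoidHom := by
      exact (Subgroup.map_equiv_eq_comap_symm f.symm G).symm
    rw [this]
    obtain ⟨S, hS, hfin⟩ := (Subgroup.fg_iff G).1 hG
    exact (Subgroup.fg_iff _).2 ⟨f.symm.toMonoidHom '' S,
      by rw [← MonoidHom.map_closure, hS], hfin.image _⟩
  have := key _ hG'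
  rw [hinf, hmc] at this
  rw [← rk_map_equiv f (G.comap _), hmc] at this
  exact this
end Ech

/-- Echelon subgroups of free groups are inert. -/
theorem echelon_isInert (n : ℕ) (H : Subgroup (FreeGroup (Fin n))) (hH : IsEchelon H) :
    IsInert H := by
  exact Ech.echelon_inert H hH
end
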